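/- Let 5 ≤ N ≤ 8. Then the extremal solution u* of (P)_λ on the unit ball is regular, i.e. sup_B u* < 1. -/

import Mathlib

open MeasureTheory Metric Set Filter

/-- The Laplacian of `u : ℝ^N → ℝ`, as the sum of pure second partial derivatives. -/
noncomputable def lap {N : ℕ} (u : EuclideanSpace ℝ (Fin N) → ℝ) (x : EuclideanSpace ℝ (Fin N)) : ℝ :=
  ∑ i : Fin N, fderiv ℝ (fun y => fderiv ℝ u y (EuclideanSpace.single i 1)) x
    (EuclideanSpace.single i 1)

/-- The biharmonic operator `Δ²`. -/
noncomputable def biharm {N : ℕ} (u : EuclideanSpace ℝ (Fin N) → ℝ)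
    (x : EuclideanSpace ℝ (Fin N)) : ℝ :=
  lap (lap u) x

/-- A classical solution of `(P)_λ` on the unit ball `B ⊆ ℝ^N`:
`u ∈ C⁴(B̄)`, `0 < u < 1` in `B`, `Δ²u = λ (1-u)⁻²` in `B`, and `u = 0`, `∂_ν u = 0` on `∂B`. -/
structure IsClassicalSolution (N : ℕ) (lam : ℝ) (u : EuclideanSpace ℝ (Fin N) → ℝ) : Prop where
  contDiffOn : ContDiffOn ℝ 4 u (closedBall (0 : EuclideanSpace ℝ (Fin N)) 1)
  pos : ∀ x ∈ ball (0 : EuclideanSpace ℝ (Fin N)) 1, 0 < u x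
  lt_one : ∀ x ∈ ball (0 : EuclideanSpace ℝ (Fin N)) 1, u x < 1
  eqn : ∀ x ∈ ball (0 : EuclideanSpace ℝ (Fin N)) 1, biharm u x = lam / (1 - u x) ^ 2
  bdry : ∀ x : EuclideanSpace ℝ (Fin N), ‖x‖ = 1 → u x = 0
  bdry_deriv : ∀ x : EuclideanSpace ℝ (Fin N), ‖x‖ = 1 →
    fderivWithin ℝ u (closedBall (0 : EuclideanSpace ℝ (Fin N)) 1) x x = 0

/-- The set of voltages `λ > 0` for which `(P)_λ` admits a classical solution;
the pull-in voltage `λ*` is its supremum. -/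
def solSet (N : ℕ) : Set ℝ := {lam | 0 < lam ∧ ∃ u, IsClassicalSolution N lam u}

/-- `λ̄_N = (8/9)(N - 2/3)(N - 8/3)`. -/
noncomputable def lamBar (N : ℕ) : ℝ := (8 / 9) * ((N : ℝ) - 2 / 3) * ((N : ℝ) - 8 / 3)

/-- Radial first-order system for the radial biharmonic equation. -/
structure Sys (m : ℕ) (R : ℝ) (u a l b f : ℝ → ℝ) : Prop where
  hu : ∀ r ∈ Ioo 0 R, HasDerivAt u (a r / r ^ m) r
  ha : ∀ r ∈ Ioo 0 R, HasDerivAt a (r ^ m * l r) r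
  hl : ∀ r ∈ Ioo 0 R, HasDerivAt l (b r / r ^ m) r
  hb : ∀ r ∈ Ioo 0 R, HasDerivAt b (r ^ m * f r) r
  cu : ContinuousOn u (Icc 0 R)
  ca : ContinuousOn a (Icc 0 R)
  cb : ContinuousOn b (Ico 0 R)
  a0 : a 0 = 0
  b0 : b 0 = 0

namespace Sys

variable {m : ℕ} {R : ℝ} {u a l b f u' a' l' b' f' : ℝ → ℝ}

theorem comb (h : Sys m R u a l b f) (h' : Sys m R u' a' l' b' f') (c d : ℝ) :
    Sys m R (fun r => c * u r + d * u' r) (fun r => c * a r + d * a' r)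
      (fun r => c * l r + d * l' r) (fun r => c * b r + d * b' r)
      (fun r => c * f r + d * f' r) where
  hu r hr := by
    convert! ((h.hu r hr).const_mul c).add ((h'.hu r hr).const_mul d) using 1; ring
  ha r hr := by
    convert! ((h.ha r hr).const_mul c).add ((h'.ha r hr).const_mul d) using 1; ring
  hl r hr := by
    convert! ((h.hl r hr).const_mul c).add ((h'.hl r hr).const_mul d) using 1; ring
  hb r hr := by
    convert! ((h.hb r hr).const_mul c).add ((h'.hb r hr).const_mul d) using 1; ring
  cu := (continuousOn_const.mul h.cu).add (continuousOn_const.mul h'.cu)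
  ca := (continuousOn_const.mul h.ca).add (continuousOn_const.mul h'.ca)
  cb := (continuousOn_const.mul h.cb).add (continuousOn_const.mul h'.cb)
  a0 := by simp [h.a0, h'.a0]
  b0 := by simp [h.b0, h'.b0]

theorem congr_f (h : Sys m R u a l b f) (hf : ∀ r ∈ Ioo 0 R, f r = f' r) :
    Sys m R u a l b f' :=
  { h with hb := fun r hr => by rw [← hf r hr]; exact h.hb r hr }

theorem restrict (h : Sys m R u a l b f) {S : ℝ} (hS : S ≤ R) : Sys m S u a l b f where
  hu r hr := h.hu r ⟨hr.1, hr.2.trans_le hS⟩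
  ha r hr := h.ha r ⟨hr.1, hr.2.trans_le hS⟩
  hl r hr := h.hl r ⟨hr.1, hr.2.trans_le hS⟩
  hb r hr := h.hb r ⟨hr.1, hr.2.trans_le hS⟩
  cu := h.cu.mono (Icc_subset_Icc_right hS)
  ca := h.ca.mono (Icc_subset_Icc_right hS)
  cb := h.cb.mono (Ico_subset_Ico_right hS)
  a0 := h.a0
  b0 := h.b0

theorem b_nonneg (h : Sys m R u a l b f) (hf : ∀ r ∈ Ioo 0 R, 0 ≤ f r) :
    ∀ r ∈ Ioo 0 R, 0 ≤ b r := by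
  intro r hr
  have hm : MonotoneOn b (Ico 0 R) := by
    apply monotoneOn_of_deriv_nonneg (convex_Ico 0 R) h.cb
    · rw [interior_Ico]; exact fun x hx => (h.hb x hx).differentiableAt.differentiableWithinAt
    · rw [interior_Ico]; intro x hx
      rw [(h.hb x hx).deriv]
      exact mul_nonneg (pow_nonneg hx.1.le _) (hf x hx)
  have := hm (⟨le_rfl, hr.1.trans hr.2⟩ : (0:ℝ) ∈ Ico 0 R) ⟨hr.1.le, hr.2⟩ hr.1.le
  rwa [h.b0] at this

theorem l_mono (h : Sys m R u a l b f) (hf : ∀ r ∈ Ioo 0 R, 0 ≤ f r) :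
    MonotoneOn l (Ioo 0 R) := by
  apply monotoneOn_of_deriv_nonneg (convex_Ioo 0 R)
  · exact fun x hx => (h.hl x hx).continuousAt.continuousWithinAt
  · rw [interior_Ioo]; exact fun x hx => (h.hl x hx).differentiableAt.differentiableWithinAt
  · rw [interior_Ioo]; intro x hx
    rw [(h.hl x hx).deriv]
    exact div_nonneg (h.b_nonneg hf x hx) (pow_nonneg hx.1.le _)

/-- mean value for `a` -/
theorem exists_l (h : Sys m R u a l b f) {r : ℝ} (hr : r ∈ Ioo 0 R) :
    ∃ x ∈ Ioo 0 r, a r = r * (x ^ m * l x) := by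
  obtain ⟨x, hx, hx'⟩ := exists_hasDerivAt_eq_slope a (fun r => r ^ m * l r) hr.1
    (h.ca.mono (Icc_subset_Icc_right hr.2.le)) (fun x hx => h.ha x ⟨hx.1, hx.2.trans hr.2⟩)
  refine ⟨x, hx, ?_⟩
  rw [hx', h.a0]
  have : r ≠ 0 := hr.1.ne'
  field_simp
  ring

theorem a_nonpos (h : Sys m R u a l b f) (hf : ∀ r ∈ Ioo 0 R, 0 ≤ f r) (haR : a R ≤ 0) :
    ∀ r ∈ Ioo 0 R, a r ≤ 0 := by
  intro r hr
  by_contra! hpos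
  obtain ⟨x, hx, hxa⟩ := h.exists_l hr
  have hlx : 0 < l x := by
    have h1 : 0 < x ^ m := pow_pos hx.1 _
    rw [hxa] at hpos
    exact (pos_iff_pos_of_mul_pos ((pos_iff_pos_of_mul_pos hpos).1 hr.1)).1 h1
  have hm : MonotoneOn a (Icc r R) := by
    apply monotoneOn_of_deriv_nonneg (convex_Icc r R)
    · exact h.ca.mono (Icc_subset_Icc_left hr.1.le)
    · rw [interior_Icc]
      exact fun y hy => (h.ha y ⟨hr.1.trans hy.1, hy.2⟩).differentiableAt.differentiableWithinAt
    · rw [interior_Icc]; intro y hy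
      have hy' : y ∈ Ioo 0 R := ⟨hr.1.trans hy.1, hy.2⟩
      rw [(h.ha y hy').deriv]
      have := h.l_mono hf (⟨hx.1, hx.2.trans hr.2⟩ : x ∈ Ioo 0 R) hy' (hx.2.trans hy.1).le
      exact mul_nonneg (pow_nonneg hy'.1.le _) (hlx.le.trans this)
  have := hm ⟨le_rfl, hr.2.le⟩ ⟨hr.2.le, le_rfl⟩ hr.2.le
  linarith

theorem u_anti (h : Sys m R u a l b f) (hf : ∀ r ∈ Ioo 0 R, 0 ≤ f r) (haR : a R ≤ 0) :
    AntitoneOn u (Icc 0 R) := by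
  apply antitoneOn_of_deriv_nonpos (convex_Icc 0 R) h.cu
  · rw [interior_Icc]; exact fun x hx => (h.hu x hx).differentiableAt.differentiableWithinAt
  · rw [interior_Icc]; intro x hx
    rw [(h.hu x hx).deriv]
    exact div_nonpos_of_nonpos_of_nonneg (h.a_nonpos hf haR x hx) (pow_nonneg hx.1.le _)

theorem u_nonneg (h : Sys m R u a l b f) (hf : ∀ r ∈ Ioo 0 R, 0 ≤ f r) (haR : a R ≤ 0)
    (huR : 0 ≤ u R) : ∀ r ∈ Icc 0 R, 0 ≤ u r := by
  intro r hr
  exact huR.trans (h.u_anti hf haR hr ⟨hr.1.trans hr.2, le_rfl⟩ hr.2)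

theorem b_pos (h : Sys m R u a l b f) (hf : ∀ r ∈ Ioo 0 R, 0 < f r) :
    ∀ r ∈ Ioo 0 R, 0 < b r := by
  intro r hr
  have hm : StrictMonoOn b (Ico 0 R) := by
    apply strictMonoOn_of_deriv_pos (convex_Ico 0 R) h.cb
    · rw [interior_Ico]; intro x hx
      rw [(h.hb x hx).deriv]
      exact mul_pos (pow_pos hx.1 _) (hf x hx)
  have := hm (⟨le_rfl, hr.1.trans hr.2⟩ : (0:ℝ) ∈ Ico 0 R) ⟨hr.1.le, hr.2⟩ hr.1
  rwa [h.b0] at this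

theorem l_smono (h : Sys m R u a l b f) (hf : ∀ r ∈ Ioo 0 R, 0 < f r) :
    StrictMonoOn l (Ioo 0 R) := by
  apply strictMonoOn_of_deriv_pos (convex_Ioo 0 R)
  · exact fun x hx => (h.hl x hx).continuousAt.continuousWithinAt
  · rw [interior_Ioo]; intro x hx
    rw [(h.hl x hx).deriv]
    exact div_pos (h.b_pos hf x hx) (pow_pos hx.1 _)

theorem a_neg (h : Sys m R u a l b f) (hf : ∀ r ∈ Ioo 0 R, 0 < f r) (haR : a R ≤ 0) :
    ∀ r ∈ Ioo 0 R, a r < 0 := by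
  intro r hr
  by_contra! hpos
  obtain ⟨x, hx, hxa⟩ := h.exists_l hr
  have hlx : 0 ≤ l x := by
    have h1 : 0 < x ^ m := pow_pos hx.1 _
    by_contra! hneg
    have : r * (x ^ m * l x) < 0 := mul_neg_of_pos_of_neg hr.1 (mul_neg_of_pos_of_neg h1 hneg)
    linarith
  have hm : StrictMonoOn a (Icc r R) := by
    apply strictMonoOn_of_deriv_pos (convex_Icc r R)
    · exact h.ca.mono (Icc_subset_Icc_left hr.1.le)
    · rw [interior_Icc]; intro y hy
      have hy' : y ∈ Ioo 0 R := ⟨hr.1.trans hy.1, hy.2⟩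
      rw [(h.ha y hy').deriv]
      have := h.l_smono hf (⟨hx.1, hx.2.trans hr.2⟩ : x ∈ Ioo 0 R) hy' (hx.2.trans hy.1)
      exact mul_pos (pow_pos hy'.1 _) (hlx.trans_lt this)
  have := hm ⟨le_rfl, hr.2.le⟩ ⟨hr.2.le, le_rfl⟩ hr.2
  linarith

theorem u_santi (h : Sys m R u a l b f) (hf : ∀ r ∈ Ioo 0 R, 0 < f r) (haR : a R ≤ 0) :
    StrictAntiOn u (Icc 0 R) := by
  apply strictAntiOn_of_deriv_neg (convex_Icc 0 R) h.cu
  · rw [interior_Icc]; intro x hx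
    rw [(h.hu x hx).deriv]
    exact div_neg_of_neg_of_pos (h.a_neg hf haR x hx) (pow_pos hx.1 _)

theorem u_pos (h : Sys m R u a l b f) (hf : ∀ r ∈ Ioo 0 R, 0 < f r) (haR : a R ≤ 0)
    (huR : 0 ≤ u R) : ∀ r ∈ Ico 0 R, 0 < u r := by
  intro r hr
  exact huR.trans_lt (h.u_santi hf haR ⟨hr.1, hr.2.le⟩ ⟨hr.1.trans hr.2.le, le_rfl⟩ hr.2)

end Sys

/-- `p` is the solution of the radial Dirichlet problem with right-hand side `f`. -/
structure GSol (m : ℕ) (R : ℝ) (p a l b f : ℝ → ℝ) : Prop extends Sys m R p a l b f where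
  cl : ContinuousOn l (Icc 0 R)
  cb' : ContinuousOn b (Icc 0 R)
  pR : p R = 0
  aR : a R = 0

theorem solve_lap (m : ℕ) {g : ℝ → ℝ} (hg : Continuous g) :
    ∃ w a : ℝ → ℝ, Continuous w ∧ Continuous a ∧ a 0 = 0 ∧
      (∀ r, 0 < r → HasDerivAt w (a r / r ^ m) r) ∧ (∀ r, HasDerivAt a (r ^ m * g r) r) := by
  set J : ℝ → ℝ := fun r => r * ∫ θ in (0:ℝ)..1, θ ^ m * g (θ * r) with hJ
  have cJ : Continuous J := by
    apply continuous_id.mul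
    apply intervalIntegral.continuous_parametric_intervalIntegral_of_continuous'
    simp only [Function.uncurry_def]
    fun_prop
  have cg : Continuous fun ρ : ℝ => ρ ^ m * g ρ := by fun_prop
  have hda : ∀ r, HasDerivAt (fun r => ∫ ρ in (0:ℝ)..r, ρ ^ m * g ρ) (r ^ m * g r) r := fun r =>
    cg.integral_hasStrictDerivAt 0 r |>.hasDerivAt
  refine ⟨fun r => ∫ ρ in (0:ℝ)..r, J ρ, fun r => ∫ ρ in (0:ℝ)..r, ρ ^ m * g ρ, ?_, ?_, by simp, ?_,
    hda⟩
  · exact continuous_iff_continuousAt.2 fun r => (cJ.integral_hasStrictDerivAt 0 r).hasDerivAt.continuousAt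
  · exact continuous_iff_continuousAt.2 fun r => (hda r).continuousAt
  · intro r hr
    have h1 := (cJ.integral_hasStrictDerivAt 0 r).hasDerivAt
    convert! h1 using 1
    have h2 : ∫ ρ in (0:ℝ)..r, ρ ^ m * g ρ = r * ∫ θ in (0:ℝ)..1, (θ * r) ^ m * g (θ * r) := by
      have := intervalIntegral.mul_integral_comp_mul_right (a := 0) (b := 1) r (f := fun ρ : ℝ => ρ ^ m * g ρ)
      simpa using this.symm
    simp only [h2, hJ]
    have h3 : ∫ θ in (0:ℝ)..1, (θ * r) ^ m * g (θ * r) = r ^ m * ∫ θ in (0:ℝ)..1, θ ^ m * g (θ * r) := by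
      rw [← intervalIntegral.integral_const_mul]
      congr 1; ext θ; rw [mul_pow]; ring
    rw [h3]
    have : r ^ m ≠ 0 := pow_ne_zero _ hr.ne'
    field_simp

theorem exists_GSol (m : ℕ) {R : ℝ} (hR : 0 < R) {f : ℝ → ℝ} (hf : Continuous f) :
    ∃ p a l b : ℝ → ℝ, GSol m R p a l b f := by
  obtain ⟨l, b, cl, cb, b0, hl, hb⟩ := solve_lap m hf
  obtain ⟨u, a, cu, ca, a0, hu, ha⟩ := solve_lap m cl
  set β := -a R / (2 * R ^ (m+1)) with hβ
  refine ⟨fun r => u r - u R + β * (r ^ 2 - R ^ 2), fun r => a r + 2 * β * r ^ (m+1),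
    fun r => l r + 2 * β * (m+1), b, ?_⟩
  refine ⟨⟨?_, ?_, ?_, fun r hr => hb r, ?_, ?_, cb.continuousOn, ?_, b0⟩, ?_, cb.continuousOn, ?_, ?_⟩
  · intro r hr
    convert! ((hu r hr.1).sub_const (u R)).add (((hasDerivAt_pow 2 r).sub_const (R^2)).const_mul β) using 1
    have : r ^ m ≠ 0 := pow_ne_zero _ hr.1.ne'
    field_simp
    push_cast
    ring
  · intro r hr
    convert! (ha r).add ((hasDerivAt_pow (m+1) r).const_mul (2*β)) using 1
    push_cast
    ring
  · intro r hr
    exact (hl r hr.1).add_const _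
  · fun_prop
  · fun_prop
  · simp [a0]
  · fun_prop
  · simp
  · have : R ^ (m+1) ≠ 0 := pow_ne_zero _ hR.ne'
    simp only [hβ]
    field_simp
    ring

theorem GSol.green {m : ℕ} {R : ℝ} (hR : 0 < R) {p a l b f p' a' l' b' f' : ℝ → ℝ}
    (h : GSol m R p a l b f) (h' : GSol m R p' a' l' b' f') (hf : ContinuousOn f (Icc 0 R)) :
    ∫ r in (0:ℝ)..R, r ^ m * (f r * p' r) = ∫ r in (0:ℝ)..R, r ^ m * (l r * l' r) := by
  have c1 : ContinuousOn (fun r => r ^ m * (f r * p' r)) (Icc 0 R) :=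
    (continuousOn_pow m).mul (hf.mul h'.cu)
  have c2 : ContinuousOn (fun r => r ^ m * (l r * l' r)) (Icc 0 R) :=
    (continuousOn_pow m).mul (h.cl.mul h'.cl)
  have i1 := c1.intervalIntegrable_of_Icc (μ := volume) hR.le
  have i2 := c2.intervalIntegrable_of_Icc (μ := volume) hR.le
  have := intervalIntegral.integral_eq_sub_of_hasDerivAt_of_le hR.le
    (f := fun r => b r * p' r - l r * a' r)
    (f' := fun r => r ^ m * (f r * p' r) - r ^ m * (l r * l' r))
    ((h.cb'.mul h'.cu).sub (h.cl.mul h'.ca)) ?_ (i1.sub i2)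
  · rw [intervalIntegral.integral_sub i1 i2] at this
    simp only [h'.pR, h'.aR, h.b0, h'.a0] at this
    linarith
  · intro r hr
    convert! ((h.hb r hr).mul (h'.hu r hr)).sub ((h.hl r hr).mul (h'.ha r hr)) using 1
    have : r ^ m ≠ 0 := pow_ne_zero _ hr.1.ne'
    field_simp
    ring

theorem GSol.symm {m : ℕ} {R : ℝ} (hR : 0 < R) {p a l b f p' a' l' b' f' : ℝ → ℝ}
    (h : GSol m R p a l b f) (h' : GSol m R p' a' l' b' f') (hf : ContinuousOn f (Icc 0 R))
    (hf' : ContinuousOn f' (Icc 0 R)) :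
    ∫ r in (0:ℝ)..R, r ^ m * (f r * p' r) = ∫ r in (0:ℝ)..R, r ^ m * (f' r * p r) := by
  rw [h.green hR h' hf, h'.green hR h hf']
  congr 1; ext r; ring

theorem GSol.nonneg {m : ℕ} {R : ℝ} {p a l b f : ℝ → ℝ}
    (h : GSol m R p a l b f) (hf : ∀ r ∈ Ioo 0 R, 0 ≤ f r) : ∀ r ∈ Icc 0 R, 0 ≤ p r :=
  h.toSys.u_nonneg hf h.aR.le h.pR.ge

theorem exists_GSol' (m : ℕ) {R : ℝ} (hR : 0 < R) {f : ℝ → ℝ} (hf : ContinuousOn f (Icc 0 R)) :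
    ∃ p a l b : ℝ → ℝ, GSol m R p a l b f := by
  have hc : Continuous (IccExtend hR.le ((Icc 0 R).domRestrict f)) :=
    (continuousOn_iff_continuous_domRestrict.1 hf).Icc_extend'
  obtain ⟨p, a, l, b, h⟩ := exists_GSol m hR hc
  refine ⟨p, a, l, b, ⟨h.toSys.congr_f ?_, h.cl, h.cb', h.pR, h.aR⟩⟩
  intro r hr
  rw [IccExtend_of_mem _ _ (Ioo_subset_Icc_self hr)]
  rfl

/-- A continuous function which is `≤ 0` with integral `≥ 0` vanishes. -/
theorem eq_zero_of_integral {R : ℝ} (hR : 0 < R) {g : ℝ → ℝ} (hg : ContinuousOn g (Icc 0 R))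
    (hle : ∀ r ∈ Icc 0 R, g r ≤ 0) (hintg : 0 ≤ ∫ r in (0:ℝ)..R, g r) :
    ∀ r ∈ Icc 0 R, g r = 0 := by
  by_contra! hne
  obtain ⟨r, hr, hr'⟩ := hne
  have : ∫ r in (0:ℝ)..R, g r < ∫ r in (0:ℝ)..R, (0:ℝ) :=
    intervalIntegral.integral_lt_integral_of_continuousOn_of_le_of_exists_lt hR hg continuousOn_const
      (fun x hx => hle x ⟨hx.1.le, hx.2⟩) ⟨r, hr, lt_of_le_of_ne (hle r hr) hr'⟩
  simp at this
  linarith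

theorem inv_sq_convex {x y : ℝ} (hx : x < 1) (hy : y < 1) :
    1 / (1 - x) ^ 2 + 2 / (1 - x) ^ 3 * (y - x) ≤ 1 / (1 - y) ^ 2 := by
  set X := 1 - x
  set Y := 1 - y
  have hX : 0 < X := by simp only [X]; linarith
  have hY : 0 < Y := by simp only [Y]; linarith
  have : y - x = X - Y := by simp [X, Y]
  rw [this]
  have h1 : 1 / Y ^ 2 - (1 / X ^ 2 + 2 / X ^ 3 * (X - Y)) = (X - Y) ^ 2 * (X + 2 * Y) / (X ^ 3 * Y ^ 2) := by
    field_simp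
    ring
  have : 0 ≤ (X - Y) ^ 2 * (X + 2 * Y) / (X ^ 3 * Y ^ 2) := by positivity
  linarith

theorem compare {m : ℕ} {R lam : ℝ} (hR : 0 < R) (hlam : 0 < lam)
    {u a l b v av lv bv fv z az lz bz fz : ℝ → ℝ}
    (hu : Sys m R u a l b (fun r => lam / (1 - u r) ^ 2)) (hu1 : ∀ r ∈ Icc 0 R, u r < 1)
    (hv : Sys m R v av lv bv fv) (hv1 : ∀ r ∈ Ioo 0 R, v r < 1)
    (hfv : ∀ r ∈ Ioo 0 R, lam / (1 - v r) ^ 2 ≤ fv r) (hvR : v R = u R) (havR : av R ≤ a R)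
    (hz : Sys m R z az lz bz fz) (hz0 : ∀ r ∈ Icc 0 R, 0 ≤ z r) (hazR : az R ≤ 0)
    (hfz : ∀ r ∈ Ioo 0 R, 2 * lam / (1 - u r) ^ 3 * z r < fz r) :
    ∀ r ∈ Icc 0 R, u r ≤ v r := by
  set V : ℝ → ℝ := fun r => 2 * lam / (1 - u r) ^ 3 with hV
  have Vpos : ∀ r ∈ Icc 0 R, 0 < V r := fun r hr => by
    have := hu1 r hr
    have : 0 < 1 - u r := by linarith
    simp only [hV]; positivity
  have cV : ContinuousOn V (Icc 0 R) := by
    apply ContinuousOn.div continuousOn_const ((continuousOn_const.sub hu.cu).pow 3)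
    intro r hr
    have := hu1 r hr
    have h' : 1 - u r ≠ 0 := by linarith
    exact pow_ne_zero 3 h'
  set φ : ℝ → ℝ := fun r => max (u r - v r) 0 with hφ
  have cφ : ContinuousOn φ (Icc 0 R) := ContinuousOn.sup (hu.cu.sub hv.cu) continuousOn_const
  obtain ⟨p, ap, lp, bp, hp⟩ := exists_GSol' m hR (cV.mul cφ)
  obtain ⟨k, ak, lk, bk, hk⟩ := exists_GSol' m hR (cV.mul hz.cu)
  have φ0 : ∀ r, 0 ≤ φ r := fun r => le_max_right _ _
  have hp0 : ∀ r ∈ Icc 0 R, 0 ≤ p r := hp.nonneg fun r hr =>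
    mul_nonneg (Vpos r (Ioo_subset_Icc_self hr)).le (φ0 r)
  have hφp : ∀ r ∈ Icc 0 R, φ r ≤ p r := by
    have h1 := (hp.toSys.comb (hv.comb hu 1 (-1)) 1 1).u_nonneg ?_ ?_ ?_
    · intro r hr
      have := h1 r hr
      exact max_le (by linarith) (hp0 r hr)
    · intro r hr
      have hr' := Ioo_subset_Icc_self hr
      have h1 := inv_sq_convex (hu1 r hr') (hv1 r hr)
      have h2 := hfv r hr
      have h3 : V r * (u r - v r) ≤ V r * φ r :=
        mul_le_mul_of_nonneg_left (le_max_left _ _) (Vpos r hr').le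
      have h4 : lam * (1 / (1 - u r) ^ 2 + 2 / (1 - u r) ^ 3 * (v r - u r)) ≤ lam * (1 / (1 - v r) ^ 2) :=
        mul_le_mul_of_nonneg_left h1 hlam.le
      have h5 : lam * (1 / (1 - u r) ^ 2 + 2 / (1 - u r) ^ 3 * (v r - u r))
        = lam / (1 - u r) ^ 2 - V r * (u r - v r) := by simp only [hV]; ring
      have h6 : lam * (1 / (1 - v r) ^ 2) = lam / (1 - v r) ^ 2 := by ring
      simp only [Pi.mul_apply]
      linarith
    · simp only [hp.aR]; linarith
    · simp only [hp.pR]; linarith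
  have hkz : ∀ r ∈ Ico 0 R, 0 < z r - k r := by
    have h1 := (hz.comb hk.toSys 1 (-1)).u_pos ?_ ?_ ?_
    · intro r hr
      have := h1 r hr
      linarith
    · intro r hr
      have := hfz r hr
      simp only [Pi.mul_apply, hV]
      linarith
    · simp only [hk.aR]; linarith
    · simp only [hk.pR]
      have := hz0 R ⟨hR.le, le_rfl⟩
      linarith
  have hsym := hp.symm hR hk (cV.mul cφ) (cV.mul hz.cu)
  have cI1 : ContinuousOn (fun r => r ^ m * ((V * φ) r * k r)) (Icc 0 R) :=
    (continuousOn_pow m).mul ((cV.mul cφ).mul hk.cu)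
  have cI2 : ContinuousOn (fun r => r ^ m * ((V * φ) r * z r)) (Icc 0 R) :=
    (continuousOn_pow m).mul ((cV.mul cφ).mul hz.cu)
  have cI3 : ContinuousOn (fun r => r ^ m * ((V * z) r * p r)) (Icc 0 R) :=
    (continuousOn_pow m).mul ((cV.mul hz.cu).mul hp.cu)
  have i1 := cI1.intervalIntegrable_of_Icc (μ := volume) hR.le
  have i2 := cI2.intervalIntegrable_of_Icc (μ := volume) hR.le
  have i3 := cI3.intervalIntegrable_of_Icc (μ := volume) hR.le
  have hle : ∫ r in (0:ℝ)..R, r ^ m * ((V * φ) r * z r) ≤ ∫ r in (0:ℝ)..R, r ^ m * ((V * z) r * p r) := by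
    apply intervalIntegral.integral_mono_on hR.le i2 i3
    intro r hr
    apply mul_le_mul_of_nonneg_left _ (pow_nonneg hr.1 _)
    simp only [Pi.mul_apply]
    have := mul_le_mul_of_nonneg_left (hφp r hr) (mul_nonneg (Vpos r hr).le (hz0 r hr))
    linarith
  have cI12 : ContinuousOn (fun r => r ^ m * ((V * φ) r * k r) - r ^ m * ((V * φ) r * z r)) (Icc 0 R) :=
    cI1.sub cI2
  have hz' := eq_zero_of_integral hR cI12 ?_ ?_
  · -- conclusion
    have hzero : ∀ r ∈ Ioo 0 R, u r ≤ v r := by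
      intro r hr
      have hr' := Ioo_subset_Icc_self hr
      have h0 := hz' r hr'
      simp only [Pi.mul_apply] at h0
      have h1 : r ^ m * (V r * (z r - k r)) * φ r = 0 := by linarith
      have h2 : 0 < r ^ m * (V r * (z r - k r)) :=
        mul_pos (pow_pos hr.1 _) (mul_pos (Vpos r hr') (hkz r ⟨hr.1.le, hr.2⟩))
      have h3 : φ r = 0 := by
        rcases mul_eq_zero.1 h1 with h | h
        · exact absurd h h2.ne'
        · exact h
      have h4 : u r - v r ≤ φ r := le_max_left _ _
      linarith
    have hcl : Icc 0 R = closure (Ioo 0 R) := (closure_Ioo hR.ne).symm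
    intro r hr
    have hw := hu.cu
    have hw' := hv.cu
    rw [hcl] at hr hw hw'
    exact ContinuousWithinAt.closure_le hr ((hw r hr).mono subset_closure)
      ((hw' r hr).mono subset_closure) hzero
  · intro r hr
    simp only [Pi.mul_apply]
    rcases hr.2.lt_or_eq with h | h
    · have h2 : 0 ≤ r ^ m * (V r * (z r - k r)) * φ r :=
        mul_nonneg (mul_nonneg (pow_nonneg hr.1 _) (mul_nonneg (Vpos r hr).le (hkz r ⟨hr.1, h⟩).le)) (φ0 r)
      linarith
    · have : φ R = 0 := by simp [hφ, hvR]
      rw [h, this]; simp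
  · rw [intervalIntegral.integral_sub i1 i2]
    linarith

theorem stab {m : ℕ} {V z az lz bz fz ψ aψ lψ : ℝ → ℝ} {α β : ℝ}
    (cV : ContinuousOn V (Icc 0 1)) (hV0 : ∀ r ∈ Icc (0:ℝ) 1, 0 ≤ V r)
    (hz : Sys m 1 z az lz bz fz) (hz1 : 0 ≤ z 1) (hzpos : ∀ r ∈ Ico (0:ℝ) 1, 0 < z r)
    (hazR : az 1 ≤ 0) (hfz : ∀ r ∈ Ioo (0:ℝ) 1, V r * z r ≤ fz r)
    (hα : 0 < α) (hαβ : α < β) (hβ : β < 1)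
    (cψ : Continuous ψ) (hψ1 : ∀ r, r ≤ α → ψ r = 0) (hψ2 : ∀ r, β ≤ r → ψ r = 0)
    (hψ : ∀ r ∈ Ioo α β, HasDerivAt ψ (aψ r / r ^ m) r)
    (haψ : ∀ r ∈ Ioo α β, HasDerivAt aψ (r ^ m * lψ r) r)
    (caψ : ContinuousOn aψ (Icc α β)) (clψ : ContinuousOn lψ (Icc α β))
    (haα : aψ α = 0) (haβ : aψ β = 0) :
    ∫ r in α..β, r ^ m * (V r * ψ r ^ 2) ≤ ∫ r in α..β, r ^ m * lψ r ^ 2 := by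
  have h01 : (0:ℝ) < 1 := one_pos
  have hsub : Icc α β ⊆ Icc 0 1 := Icc_subset_Icc hα.le hβ.le
  have hV0' : ∀ r ∈ Ioo (0:ℝ) 1, 0 ≤ V r := fun r hr => hV0 r (Ioo_subset_Icc_self hr)
  have hz0 : ∀ r ∈ Icc (0:ℝ) 1, 0 ≤ z r := by
    intro r hr
    rcases hr.2.lt_or_eq with h | h
    · exact (hzpos r ⟨hr.1, h⟩).le
    · rw [h]; exact hz1
  -- a positive lower bound for z on [α, β]
  obtain ⟨x0, hx0, hx0'⟩ := isCompact_Icc.exists_isMinOn (nonempty_Icc.2 hαβ.le) (hz.cu.mono hsub)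
  set ζ := z x0 with hζ
  have hζpos : 0 < ζ := hzpos x0 ⟨(hsub hx0).1, hx0.2.trans_lt hβ⟩
  have hζle : ∀ r ∈ Icc α β, ζ ≤ z r := fun r hr => hx0' hr
  set h : ℝ → ℝ := fun r => ψ r / max (z r) ζ with hh
  have ch : ContinuousOn h (Icc 0 1) := by
    apply ContinuousOn.div cψ.continuousOn (ContinuousOn.sup hz.cu continuousOn_const)
    intro r hr
    exact (lt_max_of_lt_right hζpos).ne'
  have hzh : ∀ r, h r * z r = ψ r := by
    intro r
    by_cases hr : r ∈ Icc α β
    · have h1 := hζle r hr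
      simp only [hh, max_eq_left h1]
      have : z r ≠ 0 := by linarith
      field_simp
    · have : ψ r = 0 := by
        rw [mem_Icc, not_and_or, not_le, not_le] at hr
        rcases hr with hr | hr
        · exact hψ1 r hr.le
        · exact hψ2 r hr.le
      simp [hh, this]
  have c1 : ContinuousOn (fun r => V r * z r) (Icc 0 1) := cV.mul hz.cu
  have c2 : ContinuousOn (fun r => V r * ψ r) (Icc 0 1) := cV.mul cψ.continuousOn
  have c3 : ContinuousOn (fun r => V r * (ψ r * h r)) (Icc 0 1) := cV.mul (cψ.continuousOn.mul ch)
  obtain ⟨p1, a1, l1, b1, s1⟩ := exists_GSol' m h01 c1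
  obtain ⟨p2, a2, l2, b2, s2⟩ := exists_GSol' m h01 c2
  obtain ⟨p3, a3, l3, b3, s3⟩ := exists_GSol' m h01 c3
  have hp1z : ∀ r ∈ Icc (0:ℝ) 1, p1 r ≤ z r := by
    have h1 := (hz.comb s1.toSys 1 (-1)).u_nonneg ?_ ?_ ?_
    · intro r hr
      have := h1 r hr
      linarith
    · intro r hr
      have := hfz r hr
      linarith
    · simp only [s1.aR]; linarith
    · simp only [s1.pR]; linarith
  have key : ∀ x ∈ Icc (0:ℝ) 1, 0 ≤ h x ^ 2 * p1 x - 2 * h x * p2 x + p3 x := by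
    intro x hx
    have h1 := ((s1.toSys.comb s2.toSys (h x ^ 2) (-2 * h x)).comb s3.toSys 1 1).u_nonneg ?_ ?_ ?_ x hx
    · linarith
    · intro r hr
      have : 0 ≤ V r * (z r * (h x - h r) ^ 2) :=
        mul_nonneg (hV0' r hr) (mul_nonneg (hz0 r (Ioo_subset_Icc_self hr)) (sq_nonneg _))
      simp only [← hzh r]
      linarith
    · simp [s1.aR, s2.aR, s3.aR]
    · simp [s1.pR, s2.pR, s3.pR]
  -- integrate
  have ci : ∀ g : ℝ → ℝ, ContinuousOn g (Icc 0 1) →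
      IntervalIntegrable (fun r => r ^ m * g r) volume 0 1 := fun g hg =>
    ((continuousOn_pow m).mul hg).intervalIntegrable_of_Icc h01.le
  have e3 := s1.symm h01 s3 c1 c3
  have A1 : ∫ r in (0:ℝ)..1, r ^ m * (V r * ψ r * p2 r) ≤ ∫ r in (0:ℝ)..1, r ^ m * (V r * (ψ r * h r) * p1 r) := by
    have i1 := ci (fun r => V r * ψ r * p2 r) (c2.mul s2.cu)
    have i2 := ci (fun r => V r * (ψ r * h r) * p1 r) (c3.mul s1.cu)
    have i3 := ci (fun r => V r * z r * p3 r) (c1.mul s3.cu)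
    have hh : ∫ r in (0:ℝ)..1, 2 * (r ^ m * (V r * ψ r * p2 r)) ≤
        ∫ r in (0:ℝ)..1, (r ^ m * (V r * (ψ r * h r) * p1 r) + r ^ m * (V r * z r * p3 r)) := by
      apply intervalIntegral.integral_mono_on h01.le (i1.const_mul 2) (i2.add i3)
      intro r hr
      have h1 := key r hr
      have h2 : 0 ≤ r ^ m * (V r * z r) := mul_nonneg (pow_nonneg hr.1 _) (mul_nonneg (hV0 r hr) (hz0 r hr))
      have h3 := mul_nonneg h2 h1
      rw [← hzh r]
      linarith
    rw [intervalIntegral.integral_const_mul, intervalIntegral.integral_add i2 i3] at hh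
    linarith
  have A2 : ∫ r in (0:ℝ)..1, r ^ m * (V r * (ψ r * h r) * p1 r) ≤ ∫ r in (0:ℝ)..1, r ^ m * (V r * ψ r * ψ r) := by
    apply intervalIntegral.integral_mono_on h01.le (ci (fun r => V r * (ψ r * h r) * p1 r) (c3.mul s1.cu)) (ci (fun r => V r * ψ r * ψ r) (c2.mul cψ.continuousOn))
    intro r hr
    apply mul_le_mul_of_nonneg_left _ (pow_nonneg hr.1 _)
    have h1 : 0 ≤ V r * (ψ r * h r) := by
      rw [← hzh r]
      have := mul_nonneg (hV0 r hr) (mul_nonneg (hz0 r hr) (sq_nonneg (h r)))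
      linarith
    have h2 := mul_le_mul_of_nonneg_left (hp1z r hr) h1
    have h3 : V r * (ψ r * h r) * z r = V r * ψ r * ψ r := by
      rw [mul_assoc (V r), mul_assoc (ψ r), hzh r]; ring
    linarith
  have A3 := s2.green h01 s2 c2
  -- localize to [α, β]
  have A4 : ∫ r in (0:ℝ)..1, r ^ m * (V r * ψ r * ψ r) = ∫ r in α..β, r ^ m * (V r * ψ r ^ 2) := by
    have i0 := ci (fun r => V r * ψ r * ψ r) (c2.mul cψ.continuousOn)
    have iA : IntervalIntegrable (fun r => r ^ m * (V r * ψ r * ψ r)) volume 0 α :=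
      i0.mono_set (by rw [uIcc_of_le hα.le, uIcc_of_le h01.le]; exact Icc_subset_Icc_right (hαβ.trans hβ).le)
    have iB : IntervalIntegrable (fun r => r ^ m * (V r * ψ r * ψ r)) volume α β :=
      i0.mono_set (by rw [uIcc_of_le hαβ.le, uIcc_of_le h01.le]; exact hsub)
    have iC : IntervalIntegrable (fun r => r ^ m * (V r * ψ r * ψ r)) volume β 1 :=
      i0.mono_set (by rw [uIcc_of_le hβ.le, uIcc_of_le h01.le]; exact Icc_subset_Icc_left (hα.trans hαβ).le)
    rw [← intervalIntegral.integral_add_adjacent_intervals (iA.trans iB) iC,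
      ← intervalIntegral.integral_add_adjacent_intervals iA iB]
    have z1 : ∫ r in (0:ℝ)..α, r ^ m * (V r * ψ r * ψ r) = 0 := by
      apply intervalIntegral.integral_zero_ae
      refine Eventually.of_forall fun r hr => ?_
      rw [uIoc_of_le hα.le] at hr
      simp [hψ1 r hr.2]
    have z2 : ∫ r in β..1, r ^ m * (V r * ψ r * ψ r) = 0 := by
      apply intervalIntegral.integral_zero_ae
      refine Eventually.of_forall fun r hr => ?_
      rw [uIoc_of_le hβ.le] at hr
      simp [hψ2 r hr.1.le]
    rw [z1, z2, zero_add, add_zero]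
    congr 1; ext r; ring
  have cl2 : ContinuousOn l2 (Icc α β) := s2.cl.mono hsub
  have cpow : ContinuousOn (fun r : ℝ => r ^ m) (Icc α β) := continuousOn_pow m
  have j1 : IntervalIntegrable (fun r => r ^ m * (l2 r * l2 r)) volume α β :=
    (cpow.mul (cl2.mul cl2)).intervalIntegrable_of_Icc hαβ.le
  have j2 : IntervalIntegrable (fun r => r ^ m * (l2 r * lψ r)) volume α β :=
    (cpow.mul (cl2.mul clψ)).intervalIntegrable_of_Icc hαβ.le
  have j3 : IntervalIntegrable (fun r => r ^ m * lψ r ^ 2) volume α β :=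
    (cpow.mul (clψ.pow 2)).intervalIntegrable_of_Icc hαβ.le
  have j4 : IntervalIntegrable (fun r => r ^ m * (V r * ψ r ^ 2)) volume α β :=
    (cpow.mul ((cV.mono hsub).mul (cψ.continuousOn.pow 2))).intervalIntegrable_of_Icc hαβ.le
  have A5 : ∫ r in α..β, r ^ m * (l2 r * l2 r) ≤ ∫ r in (0:ℝ)..1, r ^ m * (l2 r * l2 r) := by
    apply intervalIntegral.integral_mono_interval hα.le hαβ.le hβ.le _ (ci (fun r => l2 r * l2 r) (s2.cl.mul s2.cl))
    rw [EventuallyLE, ae_restrict_iff' measurableSet_Ioc]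
    refine Eventually.of_forall fun r hr => ?_
    exact mul_nonneg (pow_nonneg hr.1.le _) (mul_self_nonneg _)
  have A6 : ∫ r in α..β, r ^ m * (V r * ψ r ^ 2) = ∫ r in α..β, r ^ m * (l2 r * lψ r) := by
    have := intervalIntegral.integral_eq_sub_of_hasDerivAt_of_le hαβ.le
      (f := fun r => b2 r * ψ r - l2 r * aψ r)
      (f' := fun r => r ^ m * (V r * ψ r ^ 2) - r ^ m * (l2 r * lψ r))
      (((s2.cb'.mono hsub).mul cψ.continuousOn).sub (cl2.mul caψ)) ?_ (j4.sub j2)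
    · rw [intervalIntegral.integral_sub j4 j2] at this
      simp only [haα, haβ, hψ1 α le_rfl, hψ2 β le_rfl] at this
      linarith
    · intro r hr
      have hr' : r ∈ Ioo (0:ℝ) 1 := ⟨hα.trans hr.1, hr.2.trans hβ⟩
      convert! ((s2.hb r hr').mul (hψ r hr)).sub ((s2.hl r hr').mul (haψ r hr)) using 1
      have : r ^ m ≠ 0 := pow_ne_zero _ hr'.1.ne'
      field_simp
      ring
  have A7 : 0 ≤ ∫ r in α..β, (r ^ m * (l2 r * l2 r) - 2 * (r ^ m * (l2 r * lψ r)) + r ^ m * lψ r ^ 2) := by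
    apply intervalIntegral.integral_nonneg hαβ.le
    intro r hr
    have : 0 ≤ r ^ m * (l2 r - lψ r) ^ 2 := mul_nonneg (pow_nonneg (hα.le.trans hr.1) _) (sq_nonneg _)
    linarith
  rw [intervalIntegral.integral_add (j1.sub (j2.const_mul 2)) j3,
    intervalIntegral.integral_sub j1 (j2.const_mul 2), intervalIntegral.integral_const_mul] at A7
  linarith

theorem hardy_contra {k : ℕ} {V z az lz bz fz : ℝ → ℝ} {κ : ℝ}
    (cV : ContinuousOn V (Icc 0 1)) (hV0 : ∀ r ∈ Icc (0:ℝ) 1, 0 ≤ V r)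
    (hz : Sys (k+3) 1 z az lz bz fz) (hz1 : 0 ≤ z 1) (hzpos : ∀ r ∈ Ico (0:ℝ) 1, 0 < z r)
    (hazR : az 1 ≤ 0) (hfz : ∀ r ∈ Ioo (0:ℝ) 1, V r * z r ≤ fz r)
    (hVκ : ∀ r ∈ Icc (Real.exp (-8 * Real.pi)) (Real.exp (-4 * Real.pi)), κ / r ^ 4 ≤ V r)
    (hκ : ((k+4:ℝ) * k / 4) ^ 2 + ((k+4:ℝ) * k / 4 + 1/4) ^ 2 / 2 + 1 / 2 < 3/2 * κ) : False := by
  set α := Real.exp (-8 * Real.pi) with hα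
  set β := Real.exp (-4 * Real.pi) with hβ
  have hpi := Real.pi_pos
  have α0 : 0 < α := Real.exp_pos _
  have αβ : α < β := Real.exp_lt_exp.2 (by linarith)
  have β1 : β < 1 := by rw [hβ, Real.exp_lt_one_iff]; linarith
  have la : Real.log α = -8 * Real.pi := Real.log_exp _
  have lb : Real.log β = -4 * Real.pi := Real.log_exp _
  set s : ℝ := -(k:ℝ)/2 with hs
  set c : ℝ := (k+4:ℝ) * k / 4 with hc
  set e : ℝ → ℝ := fun r => Real.exp (s * Real.log r) with he
  set th : ℝ → ℝ := fun r => Real.log r / 2 with hth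
  set g : ℝ → ℝ := fun r => e r * (1 - Real.cos (th r)) with hg
  set P : ℝ → ℝ := fun r => max α (min r β) with hP
  set ψ : ℝ → ℝ := fun r => g (P r) with hψ
  set aψ : ℝ → ℝ := fun r => r ^ (k+2) * (e r * (s * (1 - Real.cos (th r)) + Real.sin (th r) / 2)) with haψ
  set Λ : ℝ → ℝ := fun r => -c + (c + 1/4) * Real.cos (th r) + Real.sin (th r) with hΛ
  set lψ : ℝ → ℝ := fun r => e r * Λ r / r ^ 2 with hlψ
  have dth : ∀ r, 0 < r → HasDerivAt th (1 / (2 * r)) r := by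
    intro r hr
    convert! (Real.hasDerivAt_log hr.ne').div_const 2 using 1
    field_simp
  have de : ∀ r, 0 < r → HasDerivAt e (e r * (s / r)) r := by
    intro r hr
    convert! ((Real.hasDerivAt_log hr.ne').const_mul s).exp using 1
  have ce : ∀ r, 0 < r → ContinuousAt e r := fun r hr => (de r hr).continuousAt
  have cth : ∀ r, 0 < r → ContinuousAt th r := fun r hr => (dth r hr).continuousAt
  have dcos : ∀ r, 0 < r → HasDerivAt (fun r => Real.cos (th r)) (-Real.sin (th r) * (1 / (2 * r))) r :=
    fun r hr => (dth r hr).cos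
  have dsin : ∀ r, 0 < r → HasDerivAt (fun r => Real.sin (th r)) (Real.cos (th r) * (1 / (2 * r))) r :=
    fun r hr => (dth r hr).sin
  have dg : ∀ r, 0 < r → HasDerivAt g (aψ r / r ^ (k+3)) r := by
    intro r hr
    convert! (de r hr).mul ((dcos r hr).const_sub 1) using 1
    simp only [haψ]
    field_simp
    ring
  have e2 : ∀ r, 0 < r → e r ^ 2 * r ^ k = 1 := by
    intro r hr
    have h1 : r ^ k = Real.exp (k * Real.log r) := by
      rw [Real.exp_nat_mul, Real.exp_log hr]
    have h2 : e r ^ 2 = Real.exp (2 * (s * Real.log r)) := by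
      simp only [he]; rw [← Real.exp_nat_mul]; norm_num
    rw [h1, h2, ← Real.exp_add, Real.exp_eq_one_iff]
    simp only [hs]; ring
  have Peq : ∀ r ∈ Icc α β, P r = r := by
    intro r hr
    simp [hP, hr.1, hr.2]
  have Ppos : ∀ r, 0 < P r := fun r => lt_max_of_lt_left α0
  have c4 : Real.cos (-4 * Real.pi) = 1 := by
    have := Real.cos_int_mul_two_pi (-2); push_cast at this; rw [← this]; congr 1; ring
  have c2 : Real.cos (-2 * Real.pi) = 1 := by
    have := Real.cos_int_mul_two_pi (-1); push_cast at this; rw [← this]; congr 1; ring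
  have s4 : Real.sin (-4 * Real.pi) = 0 := by
    have := Real.sin_int_mul_pi (-4); push_cast at this; exact this
  have s2 : Real.sin (-2 * Real.pi) = 0 := by
    have := Real.sin_int_mul_pi (-2); push_cast at this; exact this
  have tα : th α = -4 * Real.pi := by simp only [hth, la]; ring
  have tβ : th β = -2 * Real.pi := by simp only [hth, lb]; ring
  have gα : g α = 0 := by simp only [hg, tα, c4]; ring
  have gβ : g β = 0 := by simp only [hg, tβ, c2]; ring
  have cl : ∀ r, 0 < r → ContinuousAt lψ r := by
    intro r hr
    have h1 : ContinuousAt Λ r :=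
      (continuousAt_const.add (continuousAt_const.mul (dcos r hr).continuousAt)).add (dsin r hr).continuousAt
    exact ((ce r hr).mul h1).div (continuousAt_id.pow 2) (by positivity)
  have da : ∀ r, 0 < r → HasDerivAt aψ (r ^ (k+3) * lψ r) r := by
    intro r hr
    have h1 := (((dcos r hr).const_sub 1).const_mul s).add ((dsin r hr).div_const 2)
    have h2 := (hasDerivAt_pow (k+2) r).mul ((de r hr).mul h1)
    convert! h2 using 1
    simp only [hlψ, hΛ, hc, hs, Pi.add_apply, Pi.mul_apply]
    push_cast
    field_simp
    ring
  have main := stab (ψ := ψ) (aψ := aψ) (lψ := lψ) cV hV0 hz hz1 hzpos hazR hfz α0 αβ β1 ?_ ?_ ?_ ?_ ?_ ?_ ?_ ?_ ?_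
  · -- the two integrals
    have i1 : IntervalIntegrable (fun r => r ^ (k+3) * (V r * ψ r ^ 2)) volume α β := by
      apply ContinuousOn.intervalIntegrable_of_Icc αβ.le
      apply (continuousOn_pow _).mul
      apply (cV.mono (Icc_subset_Icc α0.le β1.le)).mul
      apply ContinuousOn.pow
      intro r hr
      have h1 : ContinuousWithinAt g (Icc α β) r := (dg r (α0.trans_le hr.1)).continuousAt.continuousWithinAt
      refine h1.congr (fun y hy => ?_) ?_
      · simp [hψ, Peq y hy]
      · simp [hψ, Peq r hr]
    have i2 : IntervalIntegrable (fun r => r ^ (k+3) * lψ r ^ 2) volume α β := by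
      apply ContinuousOn.intervalIntegrable_of_Icc αβ.le
      apply (continuousOn_pow _).mul
      apply ContinuousOn.pow
      intro r hr
      exact (cl r (α0.trans_le hr.1)).continuousWithinAt
    set F : ℝ → ℝ := fun r => (κ * (1 - Real.cos (th r)) ^ 2 - Λ r ^ 2) / r with hF
    have iF : IntervalIntegrable F volume α β := by
      apply ContinuousOn.intervalIntegrable_of_Icc αβ.le
      intro r hr
      have r0 := α0.trans_le hr.1
      have h1 : ContinuousAt Λ r :=
        (continuousAt_const.add (continuousAt_const.mul (dcos r r0).continuousAt)).add (dsin r r0).continuousAt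
      have h2 : ContinuousAt F r :=
        ((continuousAt_const.mul ((continuousAt_const.sub (dcos r r0).continuousAt).pow 2)).sub (h1.pow 2)).div
          continuousAt_id r0.ne'
      exact h2.continuousWithinAt
    have hle : ∫ r in α..β, F r ≤ ∫ r in α..β, (r ^ (k+3) * (V r * ψ r ^ 2) - r ^ (k+3) * lψ r ^ 2) := by
      apply intervalIntegral.integral_mono_on αβ.le iF (i1.sub i2)
      intro r hr
      have r0 := α0.trans_le hr.1
      have hv := hVκ r hr
      have h1 : r ^ (k+3) * lψ r ^ 2 = Λ r ^ 2 / r := by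
        have : r ^ (k+3) * lψ r ^ 2 = (e r ^ 2 * r ^ k) * Λ r ^ 2 / r := by
          simp only [hlψ]; field_simp; ring
        rw [this, e2 r r0, one_mul]
      have h2 : r ^ (k+3) * (κ / r ^ 4 * ψ r ^ 2) = κ * (1 - Real.cos (th r)) ^ 2 / r := by
        have : r ^ (k+3) * (κ / r ^ 4 * ψ r ^ 2) = (e r ^ 2 * r ^ k) * κ * (1 - Real.cos (th r)) ^ 2 / r := by
          simp only [hψ, Peq r hr, hg]; field_simp; ring
        rw [this, e2 r r0, one_mul]
      have h3 : r ^ (k+3) * (κ / r ^ 4 * ψ r ^ 2) ≤ r ^ (k+3) * (V r * ψ r ^ 2) := by gcongr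
      rw [h1]; simp only [hF]; rw [sub_div]; linarith
    rw [intervalIntegral.integral_sub i1 i2] at hle
    set G : ℝ → ℝ := fun r => κ * (3 * th r - 4 * Real.sin (th r) + Real.sin (th r) * Real.cos (th r))
      - (c ^ 2 * (2 * th r) + (c + 1/4) ^ 2 * (th r + Real.sin (th r) * Real.cos (th r))
        + (th r - Real.sin (th r) * Real.cos (th r)) - 4 * c * (c + 1/4) * Real.sin (th r)
        + 4 * c * Real.cos (th r) + 2 * (c + 1/4) * Real.sin (th r) ^ 2) with hG
    have hFG : ∫ r in α..β, F r = G β - G α := by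
      apply intervalIntegral.integral_eq_sub_of_hasDerivAt _ iF
      intro r hr
      rw [uIcc_of_le αβ.le] at hr
      have r0 := α0.trans_le hr.1
      have D1 := dth r r0
      have D2 := dsin r r0
      have D3 := dcos r r0
      have D4 := D2.mul D3
      have D := ((((D1.const_mul 3).sub (D2.const_mul 4)).add D4).const_mul κ).sub
        (((((((D1.const_mul 2).const_mul (c^2)).add ((D1.add D4).const_mul ((c+1/4)^2))).add (D1.sub D4)).sub
          (D2.const_mul (4 * c * (c+1/4)))).add (D3.const_mul (4 * c))).add ((D2.pow 2).const_mul (2 * (c+1/4))))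
      convert! D using 1
      simp only [hF, hΛ]
      have := Real.sin_sq (th r)
      field_simp
      ring_nf
      simp only [this]
      ring
    have hval : G β - G α = 4 * Real.pi * (3/2 * κ - (c ^ 2 + (c + 1/4) ^ 2 / 2 + 1/2)) := by
      simp only [hG, tα, tβ, c4, c2, s4, s2]; ring
    have : 0 < G β - G α := by
      rw [hval]; apply mul_pos (by positivity); linarith
    linarith
  · -- continuity of ψ
    have hP' : Continuous P := continuous_const.max (continuous_id.min continuous_const)
    exact continuous_iff_continuousAt.2 fun r =>
      ContinuousAt.comp (f := P) (dg (P r) (Ppos r)).continuousAt hP'.continuousAt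
  · intro r hr
    have : P r = α := by simp only [hP]; rw [min_eq_left (hr.trans αβ.le), max_eq_left hr]
    simp only [hψ, this, gα]
  · intro r hr
    have : P r = β := by simp only [hP]; rw [min_eq_right hr, max_eq_right αβ.le]
    simp only [hψ, this, gβ]
  · intro r hr
    refine (dg r (α0.trans hr.1)).congr_of_eventuallyEq ?_
    filter_upwards [isOpen_Ioo.mem_nhds hr] with y hy
    simp only [hψ, Peq y (Ioo_subset_Icc_self hy)]
  · intro r hr; exact da r (α0.trans hr.1)
  · intro r hr; exact (da r (α0.trans_le hr.1)).continuousAt.continuousWithinAt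
  · intro r hr; exact (cl r (α0.trans_le hr.1)).continuousWithinAt
  · simp only [haψ, tα, c4, s4]; ring
  · simp only [haψ, tβ, c2, s2]; ring

theorem sys_pow {m : ℕ} (hm : 4 ≤ m) (C R : ℝ) :
    Sys m R (fun r => 1 - C * r ^ (4/3:ℝ)) (fun r => -(4/3) * C * r ^ ((m:ℝ) + 1/3))
      (fun r => -(4/3) * C * (m + 1/3) * r ^ (-(2/3):ℝ))
      (fun r => (8/9) * (m + 1/3) * C * r ^ ((m:ℝ) - 5/3))
      (fun r => (8/9) * (m + 1/3) * (m - 5/3) * C * r ^ (-(8/3):ℝ)) := by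
  have hm' : (4:ℝ) ≤ m := by exact_mod_cast hm
  refine ⟨?_, ?_, ?_, ?_, ?_, ?_, ?_, ?_, ?_⟩
  · intro r hr
    convert! ((Real.hasDerivAt_rpow_const (p := 4/3) (Or.inl hr.1.ne')).const_mul C).const_sub 1 using 1
    have : r ^ ((m:ℝ) + 1/3) = r ^ m * r ^ (1/3:ℝ) := by
      rw [Real.rpow_add hr.1, Real.rpow_natCast]
    rw [this]
    have : r ^ m ≠ 0 := pow_ne_zero _ hr.1.ne'
    norm_num
    field_simp
  · intro r hr
    convert! (Real.hasDerivAt_rpow_const (p := (m:ℝ)+1/3) (Or.inl hr.1.ne')).const_mul (-(4/3) * C) using 1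
    have : r ^ ((m:ℝ) + 1/3 - 1) = r ^ m * r ^ (-(2/3):ℝ) := by
      rw [← Real.rpow_natCast, ← Real.rpow_add hr.1]; congr 1; ring
    rw [this]; ring
  · intro r hr
    convert! (Real.hasDerivAt_rpow_const (p := -(2/3)) (Or.inl hr.1.ne')).const_mul (-(4/3) * C * (m + 1/3)) using 1
    have : r ^ ((m:ℝ) - 5/3) = r ^ m * r ^ (-(2/3) - 1:ℝ) := by
      rw [← Real.rpow_natCast, ← Real.rpow_add hr.1]; congr 1; ring
    rw [this]
    have : r ^ m ≠ 0 := pow_ne_zero _ hr.1.ne'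
    field_simp
    ring
  · intro r hr
    convert! (Real.hasDerivAt_rpow_const (p := (m:ℝ)-5/3) (Or.inl hr.1.ne')).const_mul ((8/9) * (m + 1/3) * C) using 1
    have : r ^ ((m:ℝ) - 5/3 - 1) = r ^ m * r ^ (-(8/3):ℝ) := by
      rw [← Real.rpow_natCast, ← Real.rpow_add hr.1]; congr 1; ring
    rw [this]; ring
  · exact (continuous_const.sub (continuous_const.mul (Real.continuous_rpow_const (by norm_num)))).continuousOn
  · exact (continuous_const.mul (Real.continuous_rpow_const (by linarith))).continuousOn
  · exact (continuous_const.mul (Real.continuous_rpow_const (by linarith))).continuousOn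
  · rw [Real.zero_rpow (by linarith)]; ring
  · rw [Real.zero_rpow (by linarith)]; ring

theorem sys_quad (m : ℕ) (c0 c1 R : ℝ) :
    Sys m R (fun r => c0 - c1 * r ^ 2) (fun r => -2 * c1 * r ^ (m+1))
      (fun _ => -2 * c1 * (m + 1)) (fun _ => 0) (fun _ => 0) := by
  refine ⟨?_, ?_, ?_, ?_, ?_, ?_, ?_, ?_, ?_⟩
  · intro r hr
    convert! ((hasDerivAt_pow 2 r).const_mul c1).const_sub c0 using 1
    have : r ^ m ≠ 0 := pow_ne_zero _ hr.1.ne'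
    field_simp
    norm_num
    ring
  · intro r hr
    convert! (hasDerivAt_pow (m+1) r).const_mul (-2*c1) using 1
    push_cast
    simp
    ring
  · intro r hr
    simpa using hasDerivAt_const r (-2 * c1 * ((m:ℝ) + 1))
  · intro r hr
    simpa using hasDerivAt_const r (0:ℝ)
  · fun_prop
  · fun_prop
  · fun_prop
  · simp
  · simp

theorem barrier {m : ℕ} (hm : 4 ≤ m) {lam C r1 : ℝ} {u a l b z az lz bz fz : ℝ → ℝ}
    (hlam : 0 < lam) (hC : 0 < C) (h0 : 0 < r1) (h1 : r1 ≤ 1)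
    (hlC : lam ≤ C ^ 3 * ((8/9) * (m + 1/3) * (m - 5/3)))
    (hu : Sys m 1 u a l b (fun r => lam / (1 - u r) ^ 2))
    (hu1 : ∀ r ∈ Icc (0:ℝ) 1, u r < 1)
    (hz : Sys m 1 z az lz bz fz) (hz0 : ∀ r ∈ Icc (0:ℝ) 1, 0 ≤ z r) (haz : az 1 ≤ 0)
    (hfz : ∀ r ∈ Ioo (0:ℝ) 1, 2 * lam / (1 - u r) ^ 3 * z r < fz r)
    (hr1 : 1 - C * r1 ^ (4/3:ℝ) = u r1)
    (ha1 : -(4/3) * C * r1 ^ ((m:ℝ) + 1/3) ≤ a r1) :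
    (1 - lam / (C ^ 3 * ((8/9) * (m + 1/3) * (m - 5/3)))) * (C * r1 ^ (4/3:ℝ) / 3) ≤ 1 - u 0 := by
  have hm' : (4:ℝ) ≤ m := by exact_mod_cast hm
  set K : ℝ := (8/9) * (m + 1/3) * (m - 5/3) with hK
  have K0 : 0 < K := by
    rw [hK]; apply mul_pos (by positivity); linarith
  set t := lam / (C ^ 3 * K) with ht
  have t0 : 0 < t := by positivity
  have t1 : t ≤ 1 := by rw [ht, div_le_one (by positivity)]; exact hlC
  set A := C * r1 ^ (4/3:ℝ) with hA
  have A0 : 0 < A := by positivity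
  have hv := (sys_pow hm C r1).comb (sys_quad m (1 - A/3) (2/3 * A / r1 ^ 2) r1) t (1 - t)
  have hVz : ∀ r ∈ Ioo (0:ℝ) 1, 0 ≤ fz r := by
    intro r hr
    have hr' := Ioo_subset_Icc_self hr
    have h2 : 0 ≤ 2 * lam / (1 - u r) ^ 3 * z r := by
      have := hu1 r hr'
      have := hz0 r hr'
      have : 0 < 1 - u r := by linarith
      positivity
    linarith [hfz r hr]
  have key : ∀ r ∈ Ioo 0 r1, C * r ^ (4/3:ℝ) ≤ 1 - (t * (1 - C * r ^ (4/3:ℝ)) + (1 - t) * (1 - A/3 - 2/3 * A / r1 ^ 2 * r ^ 2)) := by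
    intro r hr
    have r0 := hr.1
    set y := r ^ (2/3:ℝ) with hy
    set y1 := r1 ^ (2/3:ℝ) with hy1
    have y0 : 0 < y := by positivity
    have y10 : 0 < y1 := by positivity
    have e1 : r ^ (4/3:ℝ) = y ^ 2 := by rw [hy, ← Real.rpow_natCast, ← Real.rpow_mul r0.le]; norm_num
    have e2 : r1 ^ (4/3:ℝ) = y1 ^ 2 := by rw [hy1, ← Real.rpow_natCast, ← Real.rpow_mul h0.le]; norm_num
    have e3 : r ^ 2 = y ^ 3 := by
      rw [hy, ← Real.rpow_natCast (_ ^ _) 3, ← Real.rpow_mul r0.le, ← Real.rpow_natCast]; norm_num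
    have e4 : r1 ^ 2 = y1 ^ 3 := by
      rw [hy1, ← Real.rpow_natCast (_ ^ _) 3, ← Real.rpow_mul h0.le, ← Real.rpow_natCast]; norm_num
    have : C * y ^ 2 ≤ A / 3 + 2/3 * A / r1 ^ 2 * r ^ 2 := by
      rw [hA, e2, e3, e4]
      have : C * y1 ^ 2 / 3 + 2/3 * (C * y1 ^ 2) / y1 ^ 3 * y ^ 3 - C * y ^ 2
          = C / (3 * y1) * ((y1 - y) ^ 2 * (y1 + 2 * y)) := by
        field_simp
        ring
      have : 0 ≤ C / (3 * y1) * ((y1 - y) ^ 2 * (y1 + 2 * y)) := by positivity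
      linarith
    rw [e1]
    have := mul_le_mul_of_nonneg_left this (sub_nonneg.2 t1)
    linarith
  have hpos : ∀ r ∈ Ioo 0 r1, 0 < C * r ^ (4/3:ℝ) := by
    intro r hr
    have := hr.1
    positivity
  have e2 : r1 ^ ((m:ℝ) + 1/3) * r1 ^ 2 = r1 ^ (4/3:ℝ) * r1 ^ (m+1) := by
    rw [← Real.rpow_natCast, ← Real.rpow_add h0, ← Real.rpow_natCast, ← Real.rpow_add h0]
    congr 1; push_cast; ring
  have := compare h0 hlam (hu.restrict h1) (fun r hr => hu1 r ⟨hr.1, hr.2.trans h1⟩) hv ?_ ?_ ?_ ?_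
    (hz.restrict h1) (fun r hr => hz0 r ⟨hr.1, hr.2.trans h1⟩) ?_ (fun r hr => hfz r ⟨hr.1, hr.2.trans_le h1⟩)
    0 ⟨le_rfl, h0.le⟩
  · skip
    rw [Real.zero_rpow (by norm_num)] at this
    linarith
  · intro r hr
    have := key r hr
    have := hpos r hr
    skip
    linarith
  · intro r hr
    have h2 := key r hr
    have h3 := hpos r hr
    have r0 := hr.1
    simp only [mul_zero, add_zero]
    have : t * (K * C * r ^ (-(8/3):ℝ)) = lam / (C * r ^ (4/3:ℝ)) ^ 2 := by
      have e : r ^ (-(8/3):ℝ) = 1 / (r ^ (4/3:ℝ)) ^ 2 := by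
        rw [← Real.rpow_natCast, ← Real.rpow_mul r0.le, one_div, ← Real.rpow_neg r0.le]; norm_num
      rw [e, ht]
      field_simp
    rw [this]
    apply div_le_div_of_nonneg_left hlam.le (by positivity)
    exact pow_le_pow_left₀ h3.le h2 2
  · skip
    rw [← hr1]
    field_simp
    ring
  · skip
    refine le_trans (le_of_eq ?_) ha1
    have : -2 * (2/3 * A / r1 ^ 2) * r1 ^ (m+1) = -(4/3) * C * r1 ^ ((m:ℝ) + 1/3) := by
      rw [hA]
      field_simp
      rw [show r1 ^ ((3 * (m:ℝ) + 1)/3) = r1 ^ ((m:ℝ) + 1/3) by congr 1; ring]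
      linarith
    rw [this]; ring
  · rcases h1.lt_or_eq with h | h
    · exact hz.a_nonpos hVz haz r1 ⟨h0, h⟩
    · rw [h]; exact haz

/-- The uniform distance of the minimal solutions from `1`. -/
noncomputable def eps0 : ℝ := (1/51) * ((Real.exp (-8 * Real.pi)) ^ (4/3:ℝ) / 3)

theorem eps0_pos : 0 < eps0 := by
  unfold eps0
  have := Real.exp_pos (-8 * Real.pi)
  positivity

theorem main1D {k : ℕ} (hk1 : 1 ≤ k) (hk2 : k ≤ 4) {lam : ℝ} {u a l b z az lz bz fz : ℝ → ℝ}
    (hlam : 0 < lam)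
    (hu : Sys (k+3) 1 u a l b (fun r => lam / (1 - u r) ^ 2))
    (hu1 : ∀ r ∈ Icc (0:ℝ) 1, u r < 1) (huR : u 1 = 0) (haR : a 1 = 0)
    (hz : Sys (k+3) 1 z az lz bz fz) (hz0 : ∀ r ∈ Icc (0:ℝ) 1, 0 ≤ z r) (haz : az 1 ≤ 0)
    (hfz : ∀ r ∈ Ioo (0:ℝ) 1, 2 * lam / (1 - u r) ^ 3 * z r < fz r) :
    eps0 ≤ 1 - u 0 := by
  set K : ℝ := (8/9) * (((k+3:ℕ):ℝ) + 1/3) * (((k+3:ℕ):ℝ) - 5/3) with hK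
  have K0 : 0 < K := by
    rw [hK]; push_cast
    have : (1:ℝ) ≤ k := by exact_mod_cast hk1
    apply mul_pos (by positivity); linarith
  set C0 : ℝ := (51/50 * lam / K) ^ (1/3:ℝ) with hC0
  have C03 : C0 ^ 3 * K = 51/50 * lam := by
    have : C0 ^ 3 = 51/50 * lam / K := by
      rw [hC0, ← Real.rpow_natCast, ← Real.rpow_mul (by positivity)]; norm_num
    rw [this]; field_simp
  have C00 : 0 < C0 := by positivity
  set C := max 1 C0 with hC
  have C1 : 1 ≤ C := le_max_left _ _
  have Cp : 0 < C := by linarith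
  have CC : 51/50 * lam ≤ C ^ 3 * K := by
    rw [← C03]
    have : C0 ≤ C := le_max_right _ _
    gcongr
  have h2lam : lam ≤ C ^ 3 * K := by linarith
  set w : ℝ → ℝ := fun r => 1 - C * r ^ (4/3:ℝ) with hw
  have hws := sys_pow (m := k+3) (by omega) C 1
  have cw : ContinuousOn w (Icc 0 1) := hws.cu
  have w0 : w 0 = 1 := by simp only [hw]; rw [Real.zero_rpow (by norm_num)]; ring
  have w1 : w 1 = 1 - C := by simp [hw]
  have z01 : (0:ℝ) ∈ Icc (0:ℝ) 1 := ⟨le_rfl, zero_le_one⟩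
  have z11 : (1:ℝ) ∈ Icc (0:ℝ) 1 := ⟨zero_le_one, le_rfl⟩
  have cS : IsCompact {r ∈ Icc (0:ℝ) 1 | u r ≤ w r} := by
    apply isCompact_Icc.of_isClosed_subset _ (fun r hr => hr.1)
    exact isClosed_Icc.isClosed_le hu.cu cw
  obtain ⟨r1, hr1S, hr1⟩ := cS.exists_isGreatest ⟨0, z01, by rw [w0]; exact (hu1 0 z01).le⟩
  have hmax : ∀ r ∈ Icc (0:ℝ) 1, r1 < r → w r < u r := by
    intro r hr h
    by_contra! hh
    exact absurd (hr1 ⟨hr, hh⟩) (not_le.2 h)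
  have heq : w r1 = u r1 := by
    refine le_antisymm ?_ hr1S.2
    by_contra! hlt
    have hsub : Icc r1 1 ⊆ Icc 0 1 := Icc_subset_Icc_left hr1S.1.1
    have hiv := intermediate_value_Icc' hr1S.1.2 ((cw.sub hu.cu).mono hsub)
    have : (0:ℝ) ∈ Icc ((w - u) 1) ((w - u) r1) := by
      simp only [Pi.sub_apply, w1, huR]
      constructor <;> linarith
    obtain ⟨x, hx, hx0⟩ := hiv this
    have hx0' : w x - u x = 0 := hx0
    have : x ≤ r1 := hr1 ⟨hsub hx, by linarith⟩
    have : x = r1 := le_antisymm this hx.1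
    subst this
    linarith
  have r10 : 0 < r1 := by
    refine lt_of_le_of_ne hr1S.1.1 fun h => ?_
    rw [← h, w0] at heq
    linarith [hu1 0 z01]
  have r11 : r1 ≤ 1 := hr1S.1.2
  have hda : -(4/3) * C * r1 ^ (((k+3:ℕ):ℝ) + 1/3) ≤ a r1 := by
    rcases r11.lt_or_eq with h | h
    · have hd := (hws.hu r1 ⟨r10, h⟩).sub (hu.hu r1 ⟨r10, h⟩)
      have ht := hd.tendsto_slope.mono_left (nhdsGT_le_nhdsNE r1)
      have hle := le_of_tendsto ht (b := 0) (by
        filter_upwards [Ioo_mem_nhdsGT h] with r hr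
        rw [slope_def_field]
        apply div_nonpos_of_nonpos_of_nonneg
        · have := hmax r ⟨(r10.trans hr.1).le, hr.2.le⟩ hr.1
          simp only [Pi.sub_apply]
          simp only [hw] at this heq
          linarith
        · linarith [hr.1])
      have hp : 0 < r1 ^ (k+3) := pow_pos r10 _
      rw [← sub_div] at hle
      have := (div_nonpos_iff.1 hle).resolve_left (fun h => by linarith [h.2])
      linarith [this.1]
    · rw [h, haR, Real.one_rpow]; linarith
  have hb := barrier (m := k+3) (by omega) hlam Cp r10 r11 h2lam hu hu1 hz hz0 haz hfz heq hda
  by_cases hα : Real.exp (-8 * Real.pi) ≤ r1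
  · refine le_trans ?_ hb
    unfold eps0
    have h1 : lam / (C ^ 3 * K) ≤ 50/51 := by
      rw [div_le_iff₀ (by positivity)]; linarith
    apply mul_le_mul
    · rw [← hK]; linarith
    · have h2 : Real.exp (-8 * Real.pi) ^ (4/3:ℝ) ≤ r1 ^ (4/3:ℝ) :=
        Real.rpow_le_rpow (Real.exp_pos _).le hα (by norm_num)
      have h3 : 0 ≤ r1 ^ (4/3:ℝ) := by positivity
      nlinarith
    · have := Real.exp_pos (-8 * Real.pi); positivity
    · rw [← hK]; linarith
  · exfalso
    push Not at hα
    have e1 : Real.exp (-4 * Real.pi) < 1 := by rw [Real.exp_lt_one_iff]; linarith [Real.pi_pos]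
    have e2 : Real.exp (-8 * Real.pi) < 1 := by rw [Real.exp_lt_one_iff]; linarith [Real.pi_pos]
    have hCC : C = C0 := by
      rcases le_total 1 C0 with h | h
      · exact max_eq_right h
      · exfalso
        have : C = 1 := max_eq_left h
        have := hmax 1 z11 (by linarith)
        rw [w1, huR] at this
        linarith
    have hV0 : ∀ r ∈ Icc (0:ℝ) 1, 0 < 2 * lam / (1 - u r) ^ 3 := by
      intro r hr
      have := hu1 r hr
      have : 0 < 1 - u r := by linarith
      positivity
    have hfz0 : ∀ r ∈ Ioo (0:ℝ) 1, 0 < fz r := by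
      intro r hr
      have := mul_nonneg (hV0 r (Ioo_subset_Icc_self hr)).le (hz0 r (Ioo_subset_Icc_self hr))
      linarith [hfz r hr]
    refine hardy_contra (k := k) (κ := 100/51 * K) (V := fun r => 2 * lam / (1 - u r) ^ 3) ?_
      (fun r hr => (hV0 r hr).le) hz (hz0 1 z11) (hz.u_pos hfz0 haz (hz0 1 z11)) haz
      (fun r hr => (hfz r hr).le) ?_ ?_
    · apply ContinuousOn.div continuousOn_const ((continuousOn_const.sub hu.cu).pow 3)
      intro r hr
      have := hu1 r hr
      have : 0 < 1 - u r := by linarith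
      exact pow_ne_zero _ this.ne'
    · intro r hr
      have hrp : 0 < r := (Real.exp_pos _).trans_le hr.1
      have hr' : r ∈ Icc (0:ℝ) 1 := ⟨hrp.le, hr.2.trans e1.le⟩
      have h1 := hmax r hr' (hα.trans_le hr.1)
      have h2 : 0 < 1 - u r := by linarith [hu1 r hr']
      have h3 : 1 - u r ≤ C * r ^ (4/3:ℝ) := by simp only [hw] at h1; linarith
      have h4 : 100/51 * K / r ^ 4 = 2 * lam / (C * r ^ (4/3:ℝ)) ^ 3 := by
        have e : (r ^ (4/3:ℝ)) ^ 3 = r ^ 4 := by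
          rw [← Real.rpow_natCast, ← Real.rpow_mul hrp.le, ← Real.rpow_natCast]; norm_num
        rw [mul_pow, e, hCC]
        have : lam = 50/51 * (C0 ^ 3 * K) := by linarith
        rw [this]
        field_simp
        ring
      rw [h4]
      apply div_le_div_of_nonneg_left (by positivity) (by positivity)
      exact pow_le_pow_left₀ h2.le h3 3
    · rw [hK]; push_cast
      interval_cases k <;> norm_num

section radial
variable {N : ℕ}

local notation "EN" => EuclideanSpace ℝ (Fin N)

theorem lap_congr {u v : EN → ℝ} {x : EN} (h : u =ᶠ[nhds x] v) : lap u x = lap v x := by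
  unfold lap
  refine Finset.sum_congr rfl fun i _ => ?_
  have : (fun y => fderiv ℝ u y (EuclideanSpace.single i 1)) =ᶠ[nhds x]
      (fun y => fderiv ℝ v y (EuclideanSpace.single i 1)) := by
    filter_upwards [h.fderiv (𝕜 := ℝ)] with y hy
    rw [hy]
  rw [this.fderiv_eq]

theorem lap_congr_ev {u v : EN → ℝ} {x : EN} (h : u =ᶠ[nhds x] v) : lap u =ᶠ[nhds x] lap v := by
  filter_upwards [h.eventuallyEq_nhds] with y hy
  exact lap_congr hy

theorem lap_eq_iter {u : EN → ℝ} {x : EN} (h : ContDiffAt ℝ 2 u x) :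
    lap u x = ∑ i : Fin N, iteratedFDeriv ℝ 2 u x ![EuclideanSpace.single i 1, EuclideanSpace.single i 1] := by
  unfold lap
  refine Finset.sum_congr rfl fun i _ => ?_
  have hd : DifferentiableAt ℝ (fderiv ℝ u) x :=
    (h.fderiv_right (m := 1) (by norm_num)).differentiableAt (by norm_num)
  rw [iteratedFDeriv_two_apply, fderiv_clm_apply hd (differentiableAt_const _)]
  simp

theorem lap_eq_basis {u : EN → ℝ} {x : EN} (h : ContDiffAt ℝ 2 u x)
    (v : OrthonormalBasis (Fin N) ℝ EN) :
    lap u x = ∑ i : Fin N, iteratedFDeriv ℝ 2 u x ![v i, v i] := by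
  rw [lap_eq_iter h]
  have h1 := congrFun (InnerProductSpace.laplacian_eq_iteratedFDeriv_orthonormalBasis u v) x
  have h2 := congrFun (InnerProductSpace.laplacian_eq_iteratedFDeriv_orthonormalBasis u
    (EuclideanSpace.basisFun (Fin N) ℝ)) x
  rw [h1] at h2
  simp only [EuclideanSpace.basisFun_apply] at h2
  exact h2.symm

theorem lap_comp_iso {u : EN → ℝ} {x : EN} (g : EN ≃ₗᵢ[ℝ] EN) (h : ContDiffAt ℝ 2 u (g x)) :
    lap (u ∘ g) x = lap u (g x) := by
  have hg : ContDiffAt ℝ 2 (u ∘ g) x := h.comp x g.contDiff.contDiffAt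
  rw [lap_eq_iter hg, lap_eq_basis h ((EuclideanSpace.basisFun (Fin N) ℝ).map g)]
  refine Finset.sum_congr rfl fun i _ => ?_
  have hd : ∀ᶠ y in nhds (g x), DifferentiableAt ℝ u y := by
    filter_upwards [h.eventually (by simp)] with y hy
    exact hy.differentiableAt (by norm_num)
  have hd' : ∀ᶠ y in nhds x, DifferentiableAt ℝ u (g y) := g.continuous.continuousAt.eventually hd
  have hdd : DifferentiableAt ℝ (fderiv ℝ u) (g x) :=
    (h.fderiv_right (m := 1) (by norm_num)).differentiableAt (by norm_num)
  have hgd : ∀ y, HasFDerivAt (g : EN → EN) (g.toContinuousLinearEquiv : EN →L[ℝ] EN) y :=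
    fun y => g.toContinuousLinearEquiv.hasFDerivAt
  have e1 : (fun y => fderiv ℝ (u ∘ g) y (EuclideanSpace.single i 1)) =ᶠ[nhds x]
      fun y => fderiv ℝ u (g y) (g (EuclideanSpace.single i 1)) := by
    filter_upwards [hd'] with y hy
    rw [(hy.hasFDerivAt.comp y (hgd y)).fderiv]
    rfl
  have hgg : DifferentiableAt ℝ (fderiv ℝ (u ∘ g)) x :=
    (hg.fderiv_right (m := 1) (by norm_num)).differentiableAt (by norm_num)
  have e2 : fderiv ℝ (fderiv ℝ (u ∘ g)) x (EuclideanSpace.single i 1) (EuclideanSpace.single i 1) =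
      fderiv ℝ (fun y => fderiv ℝ (u ∘ g) y (EuclideanSpace.single i 1)) x (EuclideanSpace.single i 1) := by
    rw [fderiv_clm_apply hgg (differentiableAt_const _)]
    simp
  rw [iteratedFDeriv_two_apply, iteratedFDeriv_two_apply]
  simp only [Matrix.cons_val_zero, Matrix.cons_val_one, OrthonormalBasis.map_apply,
    EuclideanSpace.basisFun_apply]
  rw [e2, e1.fderiv_eq]
  have e3 : HasFDerivAt (fun y => fderiv ℝ u (g y)) _ x := hdd.hasFDerivAt.comp x (hgd x)
  have e4 := e3.clm_apply (hasFDerivAt_const (g (EuclideanSpace.single i 1)) x)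
  rw [e4.fderiv]
  simp

theorem contDiffAt_lap {u : EN → ℝ} {x : EN} {n : ℕ} (h : ContDiffAt ℝ (n+2 : ℕ) u x) :
    ContDiffAt ℝ n (lap u) x := by
  unfold lap
  apply ContDiffAt.sum
  intro i _
  have h1 : ContDiffAt ℝ (n+1 : ℕ) (fderiv ℝ u) x := h.fderiv_right (by norm_cast)
  have h2 : ContDiffAt ℝ (n+1 : ℕ) (fun y => fderiv ℝ u y (EuclideanSpace.single i 1)) x :=
    h1.clm_apply contDiffAt_const
  have h3 : ContDiffAt ℝ n (fderiv ℝ (fun y => fderiv ℝ u y (EuclideanSpace.single i 1))) x :=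
    h2.fderiv_right (by norm_cast)
  exact h3.clm_apply contDiffAt_const

theorem IsClassicalSolution.contDiffAt {lam : ℝ} {u : EN → ℝ} (h : IsClassicalSolution N lam u)
    {x : EN} (hx : x ∈ ball (0:EN) 1) : ContDiffAt ℝ 4 u x :=
  h.contDiffOn.contDiffAt (mem_of_superset (isOpen_ball.mem_nhds hx) ball_subset_closedBall)

theorem IsClassicalSolution.comp_iso {lam : ℝ} {u : EN → ℝ} (h : IsClassicalSolution N lam u)
    (g : EN ≃ₗᵢ[ℝ] EN) : IsClassicalSolution N lam (u ∘ g) := by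
  have hb : ∀ x, x ∈ ball (0:EN) 1 → g x ∈ ball (0:EN) 1 := by
    intro x hx; simpa using hx
  have hcb : (g.toContinuousLinearEquiv : EN → EN) ⁻¹' closedBall (0:EN) 1 = closedBall (0:EN) 1 := by
    ext x; simp
  refine ⟨?_, fun x hx => h.pos _ (hb x hx), fun x hx => h.lt_one _ (hb x hx), ?_, ?_, ?_⟩
  · exact h.contDiffOn.comp g.contDiff.contDiffOn (fun x hx => by simpa using hx)
  · intro x hx
    have h1 := h.eqn (g x) (hb x hx)
    simp only [Function.comp_apply]
    rw [← h1]
    unfold biharm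
    have h2 : lap (u ∘ g) =ᶠ[nhds x] (lap u) ∘ g := by
      filter_upwards [isOpen_ball.mem_nhds hx] with y hy
      exact lap_comp_iso g ((h.contDiffAt (hb y hy)).of_le (by norm_num))
    rw [lap_congr h2, lap_comp_iso g]
    exact contDiffAt_lap (n := 2) (h.contDiffAt (hb x hx))
  · intro x hx
    exact h.bdry (g x) (by simpa using hx)
  · intro x hx
    have h1 := h.bdry_deriv (g x) (by simpa using hx)
    have hu : UniqueDiffWithinAt ℝ (closedBall (0:EN) 1) x :=
      uniqueDiffWithinAt_convex (convex_closedBall _ _) (by simp [interior_closedBall]) (by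
        apply subset_closure; simp [hx])
    have h2 := g.toContinuousLinearEquiv.comp_right_fderivWithin (f := u) (s := closedBall (0:EN) 1)
      (x := x) (by rw [hcb]; exact hu)
    rw [hcb] at h2
    have h3 : fderivWithin ℝ (u ∘ g) (closedBall (0:EN) 1) x x = _ := congrArg (fun L => L x) h2
    rw [h3]
    exact h1

theorem radial_of_min {lam : ℝ} {u : EN → ℝ} (h : IsClassicalSolution N lam u)
    (hmin : ∀ v, IsClassicalSolution N lam v → ∀ x ∈ ball (0:EN) 1, u x ≤ v x)
    {x y : EN} (hx : x ∈ ball (0:EN) 1) (hxy : ‖x‖ = ‖y‖) : u x = u y := by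
  have hy : y ∈ ball (0:EN) 1 := by simpa [← hxy] using hx
  have key : ∀ x y : EN, x ∈ ball (0:EN) 1 → ‖x‖ = ‖y‖ → u x ≤ u y := by
    intro x y hx hxy
    have := hmin _ (h.comp_iso (Submodule.reflection (Submodule.span ℝ {x - y})ᗮ)) x hx
    rw [Function.comp_apply, Submodule.reflection_sub hxy] at this
    exact this
  exact le_antisymm (key x y hx hxy) (key y x hy hxy.symm)

theorem lap_sq {F F1 : ℝ → ℝ} {F2 : ℝ} {x : EN}
    (h1 : ∀ᶠ s in nhds (‖x‖ ^ 2), HasDerivAt F (F1 s) s) (h2 : HasDerivAt F1 F2 (‖x‖ ^ 2)) :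
    lap (fun y : EN => F (‖y‖ ^ 2)) x = 4 * ‖x‖ ^ 2 * F2 + 2 * N * F1 (‖x‖ ^ 2) := by
  have hn : ∀ y : EN, HasFDerivAt (fun y : EN => ‖y‖ ^ 2) (2 • innerSL ℝ y) y := fun y =>
    (hasStrictFDerivAt_norm_sq y).hasFDerivAt
  have hc : ContinuousAt (fun y : EN => ‖y‖ ^ 2) x := (hn x).continuousAt
  unfold lap
  have key : ∀ i : Fin N, fderiv ℝ (fun y => fderiv ℝ (fun y : EN => F (‖y‖ ^ 2)) y (EuclideanSpace.single i 1)) x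
      (EuclideanSpace.single i 1) = 4 * x i ^ 2 * F2 + 2 * F1 (‖x‖ ^ 2) := by
    intro i
    have e1 : (fun y => fderiv ℝ (fun y : EN => F (‖y‖ ^ 2)) y (EuclideanSpace.single i 1)) =ᶠ[nhds x]
        fun y => F1 (‖y‖ ^ 2) * (2 * y i) := by
      filter_upwards [hc.eventually h1] with y hy
      have := HasDerivAt.comp_hasFDerivAt y hy (hn y)
      rw [show (fun y : EN => F (‖y‖ ^ 2)) = F ∘ (fun y : EN => ‖y‖ ^ 2) from rfl, this.fderiv]
      simp [EuclideanSpace.inner_single_right]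
    rw [e1.fderiv_eq]
    have d1 := HasDerivAt.comp_hasFDerivAt x h2 (hn x)
    have d2 : HasFDerivAt (fun y : EN => 2 * y i) ((2:ℝ) • (EuclideanSpace.proj i : EN →L[ℝ] ℝ)) x :=
      (EuclideanSpace.proj i : EN →L[ℝ] ℝ).hasFDerivAt.const_mul 2
    have d3 := d1.mul d2
    have d4 : HasFDerivAt (fun y : EN => F1 (‖y‖ ^ 2) * (2 * y i)) _ x := d3
    rw [d4.fderiv]
    simp [EuclideanSpace.inner_single_right]
    ring
  rw [Finset.sum_congr rfl fun i _ => key i, Finset.sum_add_distrib, ← Finset.sum_mul, ← Finset.mul_sum]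
  simp only [Finset.sum_const, Finset.card_univ, Fintype.card_fin, nsmul_eq_mul]
  rw [EuclideanSpace.norm_sq_eq]
  simp only [Real.norm_eq_abs, sq_abs]
  ring

end radial

theorem deriv_c1 {V : ℝ → ℝ} {r : ℝ} (h : ContDiffAt ℝ 2 V r) : ContDiffAt ℝ 1 (deriv V) r := by
  have h1 : ContDiffAt ℝ 1 (fderiv ℝ V) r := h.fderiv_right (by norm_num)
  exact h1.clm_apply contDiffAt_const

section radial2
variable {m : ℕ}

local notation "EM" => EuclideanSpace ℝ (Fin (m+1))

theorem norm_smul_e {e : EM} (he : ‖e‖ = 1) (r : ℝ) : ‖r • e‖ = |r| := by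
  rw [norm_smul, he, mul_one, Real.norm_eq_abs]

theorem mem_ball_smul {e : EM} (he : ‖e‖ = 1) {r : ℝ} (hr : r ∈ Ioo (-1:ℝ) 1) : r • e ∈ ball (0:EM) 1 := by
  rw [mem_ball_zero_iff, norm_smul_e he, abs_lt]; exact hr

theorem radial_ode {v : EM → ℝ} (hv : ∀ x ∈ ball (0:EM) 1, ContDiffAt ℝ 2 v x)
    (hrad : ∀ x ∈ ball (0:EM) 1, ∀ y, ‖x‖ = ‖y‖ → v x = v y) {e : EM} (he : ‖e‖ = 1)
    {r : ℝ} (hr : r ∈ Ioo (0:ℝ) 1) :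
    HasDerivAt (fun r => r ^ m * deriv (fun r : ℝ => v (r • e)) r) (r ^ m * lap v (r • e)) r := by
  set V : ℝ → ℝ := fun r : ℝ => v (r • e) with hV
  have hVc : ∀ r ∈ Ioo (-1:ℝ) 1, ContDiffAt ℝ 2 V r := by
    intro r hr
    exact ContDiffAt.comp r (hv _ (mem_ball_smul he hr)) (contDiffAt_id.smul contDiffAt_const)
  have hVd : ∀ r ∈ Ioo (-1:ℝ) 1, HasDerivAt V (deriv V r) r := fun r hr =>
    ((hVc r hr).differentiableAt (by norm_num)).hasDerivAt
  have hVdd : ∀ r ∈ Ioo (-1:ℝ) 1, HasDerivAt (deriv V) (deriv (deriv V) r) r := fun r hr =>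
    ((deriv_c1 (hVc r hr)).differentiableAt (by norm_num)).hasDerivAt
  have hrr : r ∈ Ioo (-1:ℝ) 1 := ⟨by linarith [hr.1], hr.2⟩
  have hnr : ‖r • e‖ = r := by rw [norm_smul_e he, abs_of_pos hr.1]
  have hs : √(r ^ 2) = r := Real.sqrt_sq hr.1.le
  have hlap : lap v (r • e) = deriv (deriv V) r + m / r * deriv V r := by
    have e1 : v =ᶠ[nhds (r • e)] fun y => (fun s => V √s) (‖y‖ ^ 2) := by
      filter_upwards [isOpen_ball.mem_nhds (mem_ball_smul he hrr)] with y hy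
      apply hrad y hy
      rw [norm_smul_e he, Real.sqrt_sq (norm_nonneg y), abs_norm]
    have d1 : ∀ s ∈ Ioo (0:ℝ) 1, HasDerivAt (fun s => V √s) (deriv V √s * (1 / (2 * √s))) s := by
      intro s hs
      have hq : √s ∈ Ioo (-1:ℝ) 1 := ⟨by linarith [Real.sqrt_nonneg s], by
        rw [Real.sqrt_lt' one_pos]; simpa using hs.2⟩
      exact (hVd _ hq).comp s (Real.hasDerivAt_sqrt hs.1.ne')
    have hr2 : r ^ 2 ∈ Ioo (0:ℝ) 1 := ⟨pow_pos hr.1 2, by nlinarith [hr.1, hr.2]⟩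
    have d0 := Real.hasDerivAt_sqrt hr2.1.ne'
    have d2 : HasDerivAt (fun s => deriv V √s * (1 / (2 * √s)))
        (deriv (deriv V) r / (4 * r ^ 2) - deriv V r / (4 * r ^ 3)) (r ^ 2) := by
      have h1 : HasDerivAt (deriv V) (deriv (deriv V) r) (√(r^2)) := by rw [hs]; exact hVdd r hrr
      have h2 := (h1.comp (r ^ 2) d0).div (d0.const_mul 2) (by rw [hs]; linarith [hr.1])
      rw [hs] at h2
      have h3 : (fun s => deriv V √s * (1 / (2 * √s))) = (deriv V ∘ Real.sqrt) / (fun s => 2 * √s) := by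
        ext s; simp [div_eq_mul_inv]
      rw [h3]
      convert! h2 using 1
      simp only [Function.comp_apply, hs]
      have := hr.1.ne'
      field_simp
      ring
    rw [lap_congr e1]
    have := lap_sq (x := r • e) (F := fun s => V √s) (F1 := fun s => deriv V √s * (1 / (2 * √s)))
      (F2 := deriv (deriv V) r / (4 * r ^ 2) - deriv V r / (4 * r ^ 3)) ?_ ?_
    · rw [this, hnr, hs]
      have := hr.1.ne'
      push_cast
      field_simp
      ring
    · rw [hnr]
      filter_upwards [isOpen_Ioo.mem_nhds hr2] with s hs using d1 s hs
    · rw [hnr]; exact d2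
  rw [hlap]
  convert! (hasDerivAt_pow m r).mul (hVdd r hrr) using 1
  have := hr.1.ne'
  rcases m with _ | m
  · simp
  · simp only [Nat.add_sub_cancel]
    field_simp
    ring

theorem classical_sys {lam : ℝ} {u : EM → ℝ} (hm : 1 ≤ m) (h : IsClassicalSolution (m+1) lam u)
    (hrad : ∀ x ∈ ball (0:EM) 1, ∀ y, ‖x‖ = ‖y‖ → u x = u y) {e : EM} (he : ‖e‖ = 1) :
    ∃ a l b : ℝ → ℝ, Sys m 1 (fun r : ℝ => u (r • e)) a l b (fun r => lam / (1 - u (r • e)) ^ 2) ∧ a 1 = 0 := by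
  set U : ℝ → ℝ := fun r : ℝ => u (r • e) with hU
  have hmaps : MapsTo (fun r : ℝ => r • e) (Icc (-1) 1) (closedBall (0:EM) 1) := by
    intro r hr
    rw [mem_closedBall_zero_iff, norm_smul_e he, abs_le]; exact hr
  have hUc : ContDiffOn ℝ 4 U (Icc (-1) 1) :=
    h.contDiffOn.comp (contDiff_id.smul contDiff_const).contDiffOn hmaps
  have hud : UniqueDiffOn ℝ (Icc (-1:ℝ) 1) := uniqueDiffOn_Icc (by norm_num)
  have hu2 : ∀ x ∈ ball (0:EM) 1, ContDiffAt ℝ 2 u x := fun x hx => (h.contDiffAt hx).of_le (by norm_num)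
  have hl2 : ∀ x ∈ ball (0:EM) 1, ContDiffAt ℝ 2 (lap u) x := fun x hx => contDiffAt_lap (n := 2) (h.contDiffAt hx)
  have hlrad : ∀ x ∈ ball (0:EM) 1, ∀ y, ‖x‖ = ‖y‖ → lap u x = lap u y := by
    intro x hx y hxy
    have hy : y ∈ ball (0:EM) 1 := by simpa [← hxy] using hx
    set g := Submodule.reflection (Submodule.span ℝ {x - y})ᗮ with hg
    have hgx : g x = y := Submodule.reflection_sub hxy
    rw [← hgx, ← lap_comp_iso g (hu2 _ (by rw [hgx]; exact hy))]
    apply lap_congr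
    filter_upwards [isOpen_ball.mem_nhds hx] with z hz
    exact hrad z hz _ (by simp)
  have hLc : ∀ r ∈ Ioo (-1:ℝ) 1, ContDiffAt ℝ 2 (fun r : ℝ => lap u (r • e)) r := by
    intro r hr
    exact ContDiffAt.comp (g := lap u) (f := fun r : ℝ => r • e) r (hl2 _ (mem_ball_smul he hr)) (contDiffAt_id.smul contDiffAt_const)
  have hD : ∀ r ∈ Ioo (-1:ℝ) 1, derivWithin U (Icc (-1) 1) r = deriv U r := fun r hr =>
    derivWithin_of_mem_nhds (Icc_mem_nhds hr.1 hr.2)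
  have hUa : ∀ r ∈ Ioo (-1:ℝ) 1, ContDiffAt ℝ 4 U r := fun r hr => hUc.contDiffAt (Icc_mem_nhds hr.1 hr.2)
  have h01 : ∀ r ∈ Ioo (0:ℝ) 1, r ∈ Ioo (-1:ℝ) 1 := fun r hr => ⟨by linarith [hr.1], hr.2⟩
  have h01' : Icc (0:ℝ) 1 ⊆ Icc (-1) 1 := Icc_subset_Icc_left (by norm_num)
  refine ⟨fun r => r ^ m * derivWithin U (Icc (-1) 1) r, fun r => lap u (r • e),
    fun r => r ^ m * deriv (fun r : ℝ => lap u (r • e)) r, ⟨?_, ?_, ?_, ?_, ?_, ?_, ?_, ?_, ?_⟩, ?_⟩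
  · intro r hr
    have := ((hUa r (h01 r hr)).differentiableAt (by norm_num)).hasDerivAt
    rw [hD r (h01 r hr)]
    have hp : r ^ m ≠ 0 := pow_ne_zero _ hr.1.ne'
    rwa [mul_div_cancel_left₀ _ hp]
  · intro r hr
    refine (radial_ode hu2 hrad he hr).congr_of_eventuallyEq ?_
    filter_upwards [isOpen_Ioo.mem_nhds (h01 r hr)] with s hs
    rw [hD s hs]
  · intro r hr
    have := ((hLc r (h01 r hr)).differentiableAt (by norm_num)).hasDerivAt
    have hp : r ^ m ≠ 0 := pow_ne_zero _ hr.1.ne'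
    rwa [mul_div_cancel_left₀ _ hp]
  · intro r hr
    have := radial_ode hl2 hlrad he hr
    have h2 := h.eqn _ (mem_ball_smul he (h01 r hr))
    unfold biharm at h2
    rw [h2] at this
    exact this
  · exact hUc.continuousOn.mono h01'
  · exact ((continuousOn_pow m).mul (hUc.continuousOn_derivWithin hud (by norm_num))).mono h01'
  · intro r hr
    have hr' : r ∈ Ioo (-1:ℝ) 1 := ⟨by linarith [hr.1], hr.2⟩
    exact ((continuousAt_pow r m).mul (deriv_c1 (hLc r hr')).continuousAt).continuousWithinAt
  · simp [show m ≠ 0 by omega]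
  · simp [show m ≠ 0 by omega]
  · have h1 : HasFDerivWithinAt u (fderivWithin ℝ u (closedBall (0:EM) 1) e) (closedBall (0:EM) 1) ((1:ℝ) • e) := by
      rw [one_smul]
      exact ((h.contDiffOn.differentiableOn (by norm_num)) e (by simp [he])).hasFDerivWithinAt
    have h2 : HasDerivWithinAt (fun r : ℝ => r • e) ((1:ℝ) • e) (Icc (-1) 1) 1 :=
      (hasDerivAt_id (1:ℝ)).hasDerivWithinAt.smul_const e
    have h3 := h1.comp_hasDerivWithinAt (1:ℝ) h2 hmaps
    have h4 : derivWithin U (Icc (-1) 1) 1 = _ := h3.derivWithin (hud 1 (by norm_num))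
    show (1:ℝ) ^ m * derivWithin U (Icc (-1) 1) 1 = 0
    rw [h4, one_smul, h.bdry_deriv e he, mul_zero]

end radial2

theorem regular_of_pos {m : ℕ} (hm1 : 4 ≤ m) (hm2 : m ≤ 7) (hpos : 0 < sSup (solSet (m+1)))
    (uMin : ℝ → EuclideanSpace ℝ (Fin (m+1)) → ℝ)
    (hMin : ∀ lam : ℝ, 0 < lam → lam < sSup (solSet (m+1)) →
      IsClassicalSolution (m+1) lam (uMin lam) ∧
        ∀ v, IsClassicalSolution (m+1) lam v →
          ∀ x ∈ ball (0 : EuclideanSpace ℝ (Fin (m+1))) 1, uMin lam x ≤ v x)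
    (hMono : ∀ x ∈ ball (0 : EuclideanSpace ℝ (Fin (m+1))) 1, ∀ l₁ l₂ : ℝ,
      0 < l₁ → l₁ ≤ l₂ → l₂ < sSup (solSet (m+1)) → uMin l₁ x ≤ uMin l₂ x)
    (uStar : EuclideanSpace ℝ (Fin (m+1)) → ℝ)
    (hStar : ∀ x ∈ ball (0 : EuclideanSpace ℝ (Fin (m+1))) 1,
      Tendsto (fun lam => uMin lam x) (nhdsWithin (sSup (solSet (m+1))) (Iio (sSup (solSet (m+1)))))
        (nhds (uStar x))) :
    sSup (uStar '' ball (0 : EuclideanSpace ℝ (Fin (m+1))) 1) < 1 := by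
  set S := sSup (solSet (m+1)) with hS
  obtain ⟨e, he⟩ : ∃ e : EuclideanSpace ℝ (Fin (m+1)), ‖e‖ = 1 := ⟨EuclideanSpace.single 0 1, by simp⟩
  obtain ⟨k, rfl⟩ : ∃ k, m = k + 3 := ⟨m - 3, by omega⟩
  have key : ∀ lam, 0 < lam → lam < S → ∀ x ∈ ball (0 : EuclideanSpace ℝ (Fin (k+3+1))) 1, uMin lam x ≤ 1 - eps0 := by
    intro lam h0 hlS x hx
    obtain ⟨lam', hl1, hl2⟩ := exists_between hlS
    obtain ⟨s1, m1⟩ := hMin lam h0 hlS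
    obtain ⟨s2, m2⟩ := hMin lam' (h0.trans hl1) hl2
    have rad1 : ∀ x ∈ ball (0 : EuclideanSpace ℝ (Fin (k+3+1))) 1, ∀ y, ‖x‖ = ‖y‖ → uMin lam x = uMin lam y :=
      fun x hx y hxy => radial_of_min s1 m1 hx hxy
    have rad2 : ∀ x ∈ ball (0 : EuclideanSpace ℝ (Fin (k+3+1))) 1, ∀ y, ‖x‖ = ‖y‖ → uMin lam' x = uMin lam' y :=
      fun x hx y hxy => radial_of_min s2 m2 hx hxy
    obtain ⟨a, l, b, sys1, a1⟩ := classical_sys (by omega) s1 rad1 he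
    obtain ⟨a', l', b', sys2, a1'⟩ := classical_sys (by omega) s2 rad2 he
    have hb : ∀ r ∈ Ico (0:ℝ) 1, r • e ∈ ball (0 : EuclideanSpace ℝ (Fin (k+3+1))) 1 := fun r hr =>
      mem_ball_smul he ⟨by linarith [hr.1], hr.2⟩
    have z1 : uMin lam ((1:ℝ) • e) = 0 := s1.bdry _ (by rw [one_smul, he])
    have z2 : uMin lam' ((1:ℝ) • e) = 0 := s2.bdry _ (by rw [one_smul, he])
    have lt1 : ∀ r ∈ Icc (0:ℝ) 1, uMin lam (r • e) < 1 := by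
      intro r hr
      rcases hr.2.lt_or_eq with h | h
      · exact s1.lt_one _ (hb r ⟨hr.1, h⟩)
      · rw [h, z1]; exact one_pos
    have hzs := sys2.comb sys1 1 (-1)
    have main := main1D (k := k) (by omega) (by omega) h0 sys1 lt1 z1 a1 hzs ?_ ?_ ?_
    · have hx' : ‖x‖ ∈ Ico (0:ℝ) 1 := ⟨norm_nonneg _, by simpa using hx⟩
      have h1 : uMin lam x = uMin lam (‖x‖ • e) := rad1 x hx _ (by rw [norm_smul, he]; simp)
      have h2 := sys1.u_anti (fun r hr => by positivity) a1.le (left_mem_Icc.2 zero_le_one)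
        ⟨hx'.1, hx'.2.le⟩ hx'.1
      simp only at h2 main
      rw [h1]
      linarith
    · intro r hr
      rcases hr.2.lt_or_eq with h | h
      · have := hMono _ (hb r ⟨hr.1, h⟩) lam lam' h0 hl1.le hl2
        linarith
      · rw [h, z1, z2]; norm_num
    · rw [a1, a1']; norm_num
    · intro r hr
      have h1 := s1.lt_one _ (hb r ⟨hr.1.le, hr.2⟩)
      have h2 := s2.lt_one _ (hb r ⟨hr.1.le, hr.2⟩)
      have h3 := inv_sq_convex h1 h2
      have h4 : 0 < (lam' - lam) / (1 - uMin lam' (r • e)) ^ 2 := by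
        have : 0 < 1 - uMin lam' (r • e) := by linarith
        have : 0 < lam' - lam := by linarith
        positivity
      have h5 := mul_le_mul_of_nonneg_left h3 h0.le
      rw [sub_div] at h4
      simp only [mul_div_assoc, div_eq_mul_inv] at h4 h5 ⊢
      linarith
  have hle : sSup (uStar '' ball (0 : EuclideanSpace ℝ (Fin (k+3+1))) 1) ≤ 1 - eps0 := by
    apply csSup_le ((nonempty_ball.2 one_pos).image _)
    rintro _ ⟨x, hx, rfl⟩
    refine le_of_tendsto (hStar x hx) ?_
    filter_upwards [Ioo_mem_nhdsLT hpos] with lam hlam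
    exact key lam hlam.1 hlam.2 x hx
  linarith [eps0_pos]

section bounded
variable {N : ℕ}

local notation "EN" => EuclideanSpace ℝ (Fin N)

theorem intg_mul {η g : EN → ℝ} (hη : Continuous η) (hc : HasCompactSupport η)
    (hg : ∀ x ∈ tsupport η, ContinuousAt g x) : Integrable (fun x => η x * g x) := by
  apply Continuous.integrable_of_hasCompactSupport
  · apply continuous_of_tsupport
    intro x hx
    exact hη.continuousAt.mul (hg x (tsupport_mul_subset_left hx))
  · exact hc.mul_right

theorem ibp1 {φ g : EN → ℝ} (hφ : ContDiff ℝ 1 φ) (hc : HasCompactSupport φ)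
    (hg : ∀ x ∈ tsupport φ, ContDiffAt ℝ 1 g x) (v : EN) :
    ∫ x, φ x * fderiv ℝ g x v = - ∫ x, fderiv ℝ φ x v * g x := by
  have hφ' : Continuous (fun x => fderiv ℝ φ x v) := (hφ.continuous_fderiv (by norm_num)).clm_apply continuous_const
  have hsub : tsupport (fun x => fderiv ℝ φ x v) ⊆ tsupport φ := tsupport_fderiv_apply_subset ℝ v
  apply integral_mul_fderiv_eq_neg_fderiv_mul_of_integrable
  · exact intg_mul hφ' (hc.fderiv_apply (𝕜 := ℝ) v) fun x hx => (hg x (hsub hx)).continuousAt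
  · refine intg_mul hφ.continuous hc fun x hx => ?_
    have : ContDiffAt ℝ 0 (fderiv ℝ g) x := (hg x hx).fderiv_right (by norm_num)
    exact this.continuousAt.clm_apply continuousAt_const
  · exact intg_mul hφ.continuous hc fun x hx => (hg x hx).continuousAt
  · intro x _; exact hφ.differentiable (by norm_num) x
  · intro x hx; exact (hg x hx).differentiableAt (by norm_num)

theorem ibp2 {φ g : EN → ℝ} (hφ : ContDiff ℝ 2 φ) (hc : HasCompactSupport φ)
    (hg : ∀ x ∈ tsupport φ, ContDiffAt ℝ 2 g x) :
    ∫ x, φ x * lap g x = ∫ x, lap φ x * g x := by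
  have hφ1 : ∀ v, ContDiff ℝ 1 (fun x => fderiv ℝ φ x v) := fun v =>
    (hφ.fderiv_right (m := 1) (by norm_num)).clm_apply contDiff_const
  have hφ2 : ∀ v w, Continuous (fun x => fderiv ℝ (fun x => fderiv ℝ φ x v) x w) := fun v w =>
    ((hφ1 v).continuous_fderiv (by norm_num)).clm_apply continuous_const
  have hsub : ∀ v, tsupport (fun x => fderiv ℝ φ x v) ⊆ tsupport φ := fun v => tsupport_fderiv_apply_subset ℝ v
  have hc1 : ∀ v, HasCompactSupport (fun x => fderiv ℝ φ x v) := fun v => hc.fderiv_apply (𝕜 := ℝ) v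
  have hg1 : ∀ v, ∀ x ∈ tsupport φ, ContDiffAt ℝ 1 (fun x => fderiv ℝ g x v) x := fun v x hx =>
    ((hg x hx).fderiv_right (m := 1) (by norm_num)).clm_apply contDiffAt_const
  unfold lap
  simp only [Finset.mul_sum, Finset.sum_mul]
  rw [integral_finset_sum, integral_finset_sum]
  · refine Finset.sum_congr rfl fun i _ => ?_
    rw [ibp1 (hφ.of_le (by norm_num)) hc (hg1 _), ibp1 (hφ1 _) (hc1 _)
      (fun x hx => (hg x (hsub _ hx)).of_le (by norm_num)), neg_neg]
  · intro i _
    refine intg_mul (hφ2 _ _) ((hc1 _).fderiv_apply (𝕜 := ℝ) _) fun x hx => ?_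
    exact (hg x (hsub _ (tsupport_fderiv_apply_subset ℝ _ hx))).continuousAt
  · intro i _
    refine intg_mul hφ.continuous hc fun x hx => ?_
    have : ContDiffAt ℝ 0 (fderiv ℝ (fun y => fderiv ℝ g y (EuclideanSpace.single i 1))) x :=
      (hg1 _ x hx).fderiv_right (by norm_num)
    exact this.continuousAt.clm_apply continuousAt_const

theorem tsupport_lap_subset (φ : EN → ℝ) : tsupport (lap φ) ⊆ tsupport φ := by
  apply closure_minimal _ (isClosed_tsupport φ)
  intro x hx
  by_contra h
  apply hx
  have h1 : φ =ᶠ[nhds x] fun _ => 0 := notMem_tsupport_iff_eventuallyEq.1 h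
  rw [lap_congr h1]
  simp [lap]

theorem solSet_bdd (N : ℕ) : BddAbove (solSet N) := by
  let η : ContDiffBump (0 : EuclideanSpace ℝ (Fin N)) := ⟨1/4, 1/2, by norm_num, by norm_num⟩
  have hη : ContDiff ℝ 4 η := η.contDiff
  have hηc : HasCompactSupport η := η.hasCompactSupport
  have hts : tsupport η ⊆ ball (0:EuclideanSpace ℝ (Fin N)) 1 := by
    rw [η.tsupport_eq]
    exact closedBall_subset_ball (by norm_num)
  have hlη : ContDiff ℝ 2 (lap η) := contDiff_iff_contDiffAt.2 fun x => contDiffAt_lap (n := 2) hη.contDiffAt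
  have hlη2 : Continuous (lap (lap η)) :=
    continuous_iff_continuousAt.2 fun x => (contDiffAt_lap (n := 0) hlη.contDiffAt).continuousAt
  have hlc : HasCompactSupport (lap η) := hηc.mono' (subset_closure.trans (tsupport_lap_subset _))
  have hlc2 : HasCompactSupport (lap (lap η)) := hlc.mono' (subset_closure.trans (tsupport_lap_subset _))
  have hI : 0 < ∫ x, η x := η.integral_pos
  refine ⟨(∫ x, |lap (lap η) x|) / ∫ x, η x, ?_⟩
  rintro lam ⟨hlam, u, hu⟩
  rw [le_div_iff₀ hI]
  have h4 : ∀ x ∈ tsupport η, ContDiffAt ℝ 4 u x := fun x hx => hu.contDiffAt (hts hx)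
  have e1 : ∫ x, η x * lap (lap u) x = ∫ x, lap η x * lap u x :=
    ibp2 (hη.of_le (by norm_num)) hηc fun x hx => contDiffAt_lap (n := 2) (h4 x hx)
  have e2 : ∫ x, lap η x * lap u x = ∫ x, lap (lap η) x * u x :=
    ibp2 hlη hlc fun x hx => (h4 x (tsupport_lap_subset _ hx)).of_le (by norm_num)
  have e3 : ∫ x, lam * η x ≤ ∫ x, η x * lap (lap u) x := by
    apply integral_mono (η.integrable.const_mul lam)
    · exact intg_mul hη.continuous hηc fun x hx =>
        (contDiffAt_lap (n := 0) (contDiffAt_lap (n := 2) (h4 x hx))).continuousAt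
    · intro x
      by_cases hx : x ∈ tsupport η
      · have h1 := hu.eqn x (hts hx)
        have h2 := hu.pos x (hts hx)
        have h3 := hu.lt_one x (hts hx)
        unfold biharm at h1
        simp only
        rw [h1, mul_comm lam]
        apply mul_le_mul_of_nonneg_left _ η.nonneg
        rw [le_div_iff₀ (by nlinarith)]
        have : (1 - u x) ^ 2 ≤ 1 := by nlinarith
        nlinarith
      · simp [image_eq_zero_of_notMem_tsupport hx]
  have e4 : ∫ x, lap (lap η) x * u x ≤ ∫ x, |lap (lap η) x| := by
    apply integral_mono
    · exact intg_mul hlη2 hlc2 fun x hx =>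
        (h4 x (tsupport_lap_subset _ (tsupport_lap_subset _ hx))).continuousAt
    · exact (hlη2.integrable_of_hasCompactSupport hlc2).abs
    · intro x
      simp only
      by_cases hx : x ∈ tsupport (lap (lap η))
      · have hx' := hts (tsupport_lap_subset _ (tsupport_lap_subset _ hx))
        have h2 := hu.pos x hx'
        have h3 := hu.lt_one x hx'
        calc lap (lap η) x * u x ≤ |lap (lap η) x * u x| := le_abs_self _
          _ = |lap (lap η) x| * u x := by rw [abs_mul, abs_of_pos h2]
          _ ≤ |lap (lap η) x| * 1 := mul_le_mul_of_nonneg_left h3.le (abs_nonneg _)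
          _ = _ := mul_one _
      · simp [image_eq_zero_of_notMem_tsupport hx]
  rw [integral_const_mul] at e3
  linarith

end bounded

/-- truncated `ℓ¹` norm of a power series -/
noncomputable def tn (n : ℕ) (F : PowerSeries ℝ) : ℝ := ∑ k ∈ Finset.range (n+1), |PowerSeries.coeff k F|

theorem tn_nonneg (n : ℕ) (F : PowerSeries ℝ) : 0 ≤ tn n F := Finset.sum_nonneg fun _ _ => abs_nonneg _

theorem tn_add (n : ℕ) (F G : PowerSeries ℝ) : tn n (F + G) ≤ tn n F + tn n G := by
  unfold tn
  rw [← Finset.sum_add_distrib]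
  exact Finset.sum_le_sum fun k _ => by rw [map_add]; exact abs_add_le _ _

theorem tn_neg (n : ℕ) (F : PowerSeries ℝ) : tn n (-F) = tn n F := by
  unfold tn; simp

theorem tn_mono {n n' : ℕ} (h : n ≤ n') (F : PowerSeries ℝ) : tn n F ≤ tn n' F := by
  unfold tn
  apply Finset.sum_le_sum_of_subset_of_nonneg
  · intro k hk; simp at *; omega
  · intros; exact abs_nonneg _

theorem tn_mul (n : ℕ) (F G : PowerSeries ℝ) : tn n (F * G) ≤ tn n F * tn n G := by
  unfold tn
  calc ∑ k ∈ Finset.range (n+1), |PowerSeries.coeff k (F * G)|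
      ≤ ∑ k ∈ Finset.range (n+1), ∑ i ∈ Finset.range (k+1), |PowerSeries.coeff i F| * |PowerSeries.coeff (k-i) G| := by
        refine Finset.sum_le_sum fun k _ => ?_
        rw [PowerSeries.coeff_mul, Finset.Nat.sum_antidiagonal_eq_sum_range_succ
          (fun i j => PowerSeries.coeff i F * PowerSeries.coeff j G)]
        refine (Finset.abs_sum_le_sum_abs _ _).trans (le_of_eq ?_)
        simp only [abs_mul]
    _ = ∑ i ∈ Finset.range (n+1), ∑ j ∈ Finset.range (n+1-i), |PowerSeries.coeff i F| * |PowerSeries.coeff j G| :=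
        Finset.sum_range_diag_flip (n+1) fun i j => |PowerSeries.coeff i F| * |PowerSeries.coeff j G|
    _ ≤ ∑ i ∈ Finset.range (n+1), ∑ j ∈ Finset.range (n+1), |PowerSeries.coeff i F| * |PowerSeries.coeff j G| := by
        refine Finset.sum_le_sum fun i _ => ?_
        apply Finset.sum_le_sum_of_subset_of_nonneg
        · intro k hk; simp at *; omega
        · intros; positivity
    _ = _ := by rw [Finset.sum_mul_sum]

/-- the Picard map for the power series -/
noncomputable def Pic (B μ : ℝ) (c : ℕ → ℝ) (Y : PowerSeries ℝ) : PowerSeries ℝ :=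
  PowerSeries.mk fun n => match n with
    | 0 => 1
    | 1 => B
    | k+2 => -μ * PowerSeries.coeff k (Y⁻¹ * Y⁻¹) / c k

theorem Pic_const (B μ : ℝ) (c : ℕ → ℝ) (Y : PowerSeries ℝ) : PowerSeries.constantCoeff (Pic B μ c Y) = 1 := by
  rw [← PowerSeries.coeff_zero_eq_constantCoeff_apply]
  simp [Pic]

theorem Pic_congr (B μ : ℝ) (c : ℕ → ℝ) {Y Y' : PowerSeries ℝ} {n : ℕ}
    (h1 : PowerSeries.constantCoeff Y = 1) (h2 : PowerSeries.constantCoeff Y' = 1)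
    (h : PowerSeries.X ^ n ∣ Y - Y') : PowerSeries.X ^ (n+1) ∣ Pic B μ c Y - Pic B μ c Y' := by
  have hi1 := PowerSeries.mul_inv_cancel Y (by rw [h1]; norm_num)
  have hi2 := PowerSeries.mul_inv_cancel Y' (by rw [h2]; norm_num)
  have hd : PowerSeries.X ^ n ∣ Y⁻¹ * Y⁻¹ - Y'⁻¹ * Y'⁻¹ := by
    have e : Y⁻¹ - Y'⁻¹ = (Y - Y') * (-(Y⁻¹ * Y'⁻¹)) := by
      linear_combination Y'⁻¹ * hi1 - Y⁻¹ * hi2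
    have : Y⁻¹ * Y⁻¹ - Y'⁻¹ * Y'⁻¹ = (Y - Y') * (-(Y⁻¹ * Y'⁻¹) * (Y⁻¹ + Y'⁻¹)) := by
      linear_combination (Y⁻¹ + Y'⁻¹) * e
    rw [this]
    exact h.mul_right _
  rw [PowerSeries.X_pow_dvd_iff] at hd ⊢
  intro m hm
  rw [map_sub]
  match m with
  | 0 => simp [Pic]
  | 1 => simp [Pic]
  | k+2 =>
    have := hd k (by omega)
    rw [map_sub, sub_eq_zero] at this
    simp [Pic, this]

theorem exists_Pic_fixed (B μ : ℝ) (c : ℕ → ℝ) : ∃ Y : PowerSeries ℝ, Pic B μ c Y = Y := by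
  set P := Pic B μ c with hP
  have hc : ∀ n, PowerSeries.constantCoeff (P^[n] 1) = 1 := by
    intro n
    cases n with
    | zero => simp
    | succ n => rw [Function.iterate_succ_apply']; exact Pic_const _ _ _ _
  have hstep : ∀ n, PowerSeries.X ^ n ∣ P^[n+1] 1 - P^[n] 1 := by
    intro n
    induction n with
    | zero => simp
    | succ n ih =>
      rw [Function.iterate_succ_apply' P (n+1), Function.iterate_succ_apply' P n]
      rw [Function.iterate_succ_apply' P n] at ih
      have := Pic_congr B μ c (hc (n+1)) (hc n) (by rw [Function.iterate_succ_apply' P n]; exact ih)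
      rw [Function.iterate_succ_apply' P n] at this
      exact this
  have hchain : ∀ m n, m < n → PowerSeries.coeff m (P^[n] 1) = PowerSeries.coeff m (P^[m+1] 1) := by
    intro m n hmn
    induction n, hmn using Nat.le_induction with
    | base => rfl
    | succ n hn ih =>
      have := (PowerSeries.X_pow_dvd_iff.1 (hstep n)) m (by omega)
      rw [map_sub, sub_eq_zero] at this
      rw [this, ih]
  set Y : PowerSeries ℝ := PowerSeries.mk fun n => PowerSeries.coeff n (P^[n+1] 1) with hY
  have hYn : ∀ n, PowerSeries.X ^ n ∣ Y - P^[n] 1 := by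
    intro n
    rw [PowerSeries.X_pow_dvd_iff]
    intro m hm
    rw [map_sub, hchain m n hm, hY, PowerSeries.coeff_mk, sub_self]
  have hYc : PowerSeries.constantCoeff Y = 1 := by
    rw [← PowerSeries.coeff_zero_eq_constantCoeff_apply, hY, PowerSeries.coeff_mk,
      PowerSeries.coeff_zero_eq_constantCoeff_apply]
    exact hc 1
  refine ⟨Y, ?_⟩
  ext n
  have h1 := Pic_congr B μ c hYc (hc (n)) (hYn n)
  have h2 := hYn (n+1)
  rw [Function.iterate_succ_apply'] at h2
  have e1 := PowerSeries.X_pow_dvd_iff.1 h1 n (by omega)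
  have e2 := PowerSeries.X_pow_dvd_iff.1 h2 n (by omega)
  rw [map_sub, sub_eq_zero] at e1 e2
  rw [e1, e2]

theorem exists_series (c : ℕ → ℝ) (hc0 : 0 < c 0) (hc : ∀ k, c 0 ≤ c k) :
    ∃ Y Q : PowerSeries ℝ, Y * Q = 1 ∧ PowerSeries.coeff 0 Y = 1 ∧ PowerSeries.coeff 1 Y = 1/1000 ∧
      PowerSeries.coeff 2 Y = -(2/1000) ∧
      (∀ k, c k * PowerSeries.coeff (k+2) Y = - (2/1000 * c 0) * PowerSeries.coeff k (Q * Q)) ∧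
      (∀ n, tn n (Y - 1) ≤ 4/1000) ∧ (∀ n, tn n (Q - 1) ≤ 1/100) := by
  obtain ⟨Y, hY⟩ := exists_Pic_fixed (1/1000) (2/1000 * c 0) c
  have hYc : PowerSeries.constantCoeff Y = 1 := by rw [← hY]; exact Pic_const _ _ _ _
  have hQ := PowerSeries.mul_inv_cancel Y (by rw [hYc]; norm_num)
  set Q := Y⁻¹ with hQd
  have y0 : PowerSeries.coeff 0 Y = 1 := by rw [PowerSeries.coeff_zero_eq_constantCoeff_apply, hYc]
  have y1 : PowerSeries.coeff 1 Y = 1/1000 := by rw [← hY]; simp [Pic]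
  have hrec : ∀ k, PowerSeries.coeff (k+2) Y = -(2/1000 * c 0) * PowerSeries.coeff k (Q * Q) / c k := by
    intro k
    conv_lhs => rw [← hY]
    simp only [Pic, PowerSeries.coeff_mk]; rfl
  have hcp : ∀ k, 0 < c k := fun k => hc0.trans_le (hc k)
  have hQc : PowerSeries.coeff 0 Q = 1 := by
    have := congrArg PowerSeries.constantCoeff hQ
    rw [map_mul, hYc, one_mul, map_one] at this
    rw [PowerSeries.coeff_zero_eq_constantCoeff_apply, this]
  have y2 : PowerSeries.coeff 2 Y = -(2/1000) := by
    have := hrec 0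
    rw [PowerSeries.coeff_zero_eq_constantCoeff_apply, map_mul, ← PowerSeries.coeff_zero_eq_constantCoeff_apply, hQc] at this
    rw [show 2 = 0 + 2 from rfl, this]; field_simp
  -- bounds
  have bT : ∀ n, tn n (Y - 1) ≤ 4/1000 → tn n (Q - 1) ≤ 1/100 := by
    intro n h
    have e : Q - 1 = -(Y - 1) + -((Y - 1) * (Q - 1)) := by linear_combination hQ
    have h1 : tn n (Q - 1) ≤ tn n (Y - 1) + tn n (Y - 1) * tn n (Q - 1) := by
      conv_lhs => rw [e]
      refine (tn_add _ _ _).trans ?_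
      rw [tn_neg, tn_neg]
      linarith [tn_mul n (Y - 1) (Q - 1)]
    have := tn_nonneg n (Q - 1)
    nlinarith
  have bZ : ∀ n, tn n (Q - 1) ≤ 1/100 → tn n (Q * Q) ≤ 3/2 := by
    intro n h
    have e : Q * Q = 1 + ((Q - 1) + ((Q - 1) + (Q - 1) * (Q - 1))) := by ring
    have h1 : tn n (1 : PowerSeries ℝ) = 1 := by
      unfold tn
      rw [Finset.sum_eq_single 0]
      · simp
      · intro k _ hk; simp [PowerSeries.coeff_one, hk]
      · simp
    have h2 := tn_add n 1 ((Q - 1) + ((Q - 1) + (Q - 1) * (Q - 1)))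
    have h3 := tn_add n (Q - 1) ((Q - 1) + (Q - 1) * (Q - 1))
    have h4 := tn_add n (Q - 1) ((Q - 1) * (Q - 1))
    have h5 := tn_mul n (Q - 1) (Q - 1)
    have h6 := tn_nonneg n (Q - 1)
    rw [e]
    nlinarith
  have bS : ∀ n, tn (n+2) (Y - 1) ≤ 1/1000 + 2/1000 * tn n (Q * Q) := by
    intro n
    unfold tn
    rw [Finset.sum_range_succ', Finset.sum_range_succ', Finset.mul_sum]
    have a0 : |PowerSeries.coeff 0 (Y - 1)| = 0 := by rw [map_sub, y0]; simp
    have a1 : |PowerSeries.coeff (0+1) (Y - 1)| = 1/1000 := by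
      rw [map_sub, zero_add, y1]; simp [PowerSeries.coeff_one]
    rw [a0, a1]
    have : ∀ k ∈ Finset.range (n+1), |PowerSeries.coeff (k+1+1) (Y - 1)| ≤ 2/1000 * |PowerSeries.coeff k (Q * Q)| := by
      intro k _
      rw [map_sub, hrec k]
      simp only [PowerSeries.coeff_one, Nat.add_eq_zero_iff, one_ne_zero, and_false, if_false, sub_zero]
      rw [abs_div, abs_mul, abs_neg, abs_of_pos (by positivity : 0 < 2/1000 * c 0), abs_of_pos (hcp k),
        div_le_iff₀ (hcp k)]
      have := mul_le_mul_of_nonneg_left (hc k) (abs_nonneg (PowerSeries.coeff k (Q * Q)))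
      nlinarith
    have := Finset.sum_le_sum this
    linarith
  have hb : ∀ n, tn n (Y - 1) ≤ 4/1000 := by
    intro n
    induction n using Nat.strong_induction_on with
    | _ n ih =>
      match n with
      | 0 => exact (tn_mono (by omega : 0 ≤ 1) _).trans (by
          unfold tn; rw [Finset.sum_range_succ, Finset.sum_range_one, map_sub, map_sub, y0, y1]
          simp [PowerSeries.coeff_one]; norm_num)
      | 1 =>
          unfold tn; rw [Finset.sum_range_succ, Finset.sum_range_one, map_sub, map_sub, y0, y1]
          simp [PowerSeries.coeff_one]; norm_num
      | k+2 =>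
        have := bZ k (bT k (ih k (by omega)))
        linarith [bS k]
  refine ⟨Y, Q, hQ, y0, y1, y2, ?_, hb, fun n => bT n (hb n)⟩
  intro k
  rw [hrec k]
  have := (hcp k).ne'
  field_simp

/-- evaluation of a real power series -/
noncomputable def ev (F : PowerSeries ℝ) (s : ℝ) : ℝ := ∑' k, PowerSeries.coeff k F * s ^ k

/-- formal derivative -/
noncomputable def pd (F : PowerSeries ℝ) : PowerSeries ℝ :=
  PowerSeries.mk fun k => ((k:ℝ)+1) * PowerSeries.coeff (k+1) F

/-- polynomially bounded coefficients -/
def PB (F : PowerSeries ℝ) : Prop := ∃ M : ℝ, 0 ≤ M ∧ ∃ j : ℕ, ∀ k : ℕ, |PowerSeries.coeff k F| ≤ M * ((k:ℝ)+1) ^ j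

theorem PB.pd {F : PowerSeries ℝ} (h : PB F) : PB (pd F) := by
  obtain ⟨M, hM, j, h⟩ := h
  refine ⟨M * 2 ^ j, by positivity, j+1, fun k => ?_⟩
  have hk : (0:ℝ) ≤ k := Nat.cast_nonneg k
  rw [_root_.pd, PowerSeries.coeff_mk, abs_mul, abs_of_nonneg (by linarith : (0:ℝ) ≤ k + 1)]
  have h1 := h (k+1)
  have h2 : (((k+1:ℕ):ℝ)+1) ^ j ≤ (2 * ((k:ℝ)+1)) ^ j := by
    apply pow_le_pow_left₀ (by positivity)
    push_cast; linarith
  rw [mul_pow] at h2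
  calc ((k:ℝ)+1) * |PowerSeries.coeff (k+1) F| ≤ ((k:ℝ)+1) * (M * (2 ^ j * ((k:ℝ)+1) ^ j)) := by
        gcongr; exact h1.trans (by gcongr)
    _ = _ := by ring

theorem PB.summable {F : PowerSeries ℝ} (h : PB F) {s : ℝ} (hs : |s| < 1) :
    Summable fun k => ‖PowerSeries.coeff k F * s ^ k‖ := by
  obtain ⟨M, hM, j, h⟩ := h
  have s1 := (summable_pow_mul_geometric_of_norm_lt_one (R := ℝ) j (r := |s|) (by simpa using hs)).mul_left (2 ^ j)
  have s2 := summable_geometric_of_lt_one (abs_nonneg s) hs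
  refine Summable.of_nonneg_of_le (fun k => norm_nonneg _) (fun k => ?_) ((s1.add s2).mul_left M)
  rw [Real.norm_eq_abs, abs_mul, abs_pow]
  have hk : ((k:ℝ)+1) ^ j ≤ 2 ^ j * (k:ℝ) ^ j + 1 := by
    rcases Nat.eq_zero_or_pos k with rfl | hk
    · simp
    · have : (1:ℝ) ≤ k := by exact_mod_cast hk
      rw [← mul_pow]
      have := pow_le_pow_left₀ (by positivity) (by linarith : (k:ℝ) + 1 ≤ 2 * k) j
      linarith
  calc |PowerSeries.coeff k F| * |s| ^ k ≤ M * (2 ^ j * (k:ℝ) ^ j + 1) * |s| ^ k := by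
        gcongr; exact (h k).trans (by gcongr)
    _ = _ := by ring

theorem ev_hasDerivAt {F : PowerSeries ℝ} (h : PB F) {s : ℝ} (hs : |s| < 1) :
    HasDerivAt (ev F) (ev (pd F) s) s := by
  obtain ⟨r, hr1, hr2⟩ := exists_between hs
  have hr0 : 0 < r := (abs_nonneg s).trans_lt hr1
  have hrr : |r| < 1 := by rwa [abs_of_pos hr0]
  have e : ∀ y, |y| < 1 → ∑' k, PowerSeries.coeff k F * ((k:ℝ) * y ^ (k-1)) = ev (pd F) y := by
    intro y hy
    have hsum : Summable fun k : ℕ => PowerSeries.coeff k F * ((k:ℝ) * y ^ (k-1)) := by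
      rw [← summable_nat_add_iff 1]
      refine (h.pd.summable hy).of_norm.congr fun k => ?_
      rw [pd, PowerSeries.coeff_mk]; push_cast; ring_nf
    rw [hsum.tsum_eq_zero_add, ev]
    simp only [Nat.cast_zero, zero_mul, mul_zero, zero_add]
    refine tsum_congr fun k => ?_
    rw [pd, PowerSeries.coeff_mk]; push_cast; ring_nf
  have hu : Summable fun k : ℕ => ‖PowerSeries.coeff k F‖ * ((k:ℝ) * r ^ (k-1)) := by
    rw [← summable_nat_add_iff 1]
    refine (h.pd.summable hrr).congr fun k => ?_
    rw [pd, PowerSeries.coeff_mk, norm_mul, norm_mul, norm_pow, Real.norm_of_nonneg hr0.le,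
      Real.norm_of_nonneg (by positivity : (0:ℝ) ≤ k + 1)]; push_cast; simp; ring
  rw [← e s hs]
  refine hasDerivAt_tsum_of_isPreconnected (t := ball (0:ℝ) r) (y₀ := 0)
    (g := fun k y => PowerSeries.coeff k F * y ^ k)
    (g' := fun k y => PowerSeries.coeff k F * ((k:ℝ) * y ^ (k-1))) hu isOpen_ball
    (convex_ball _ _).isPreconnected ?_ ?_ (by simpa using hr0) ?_ (by simpa using hr1)
  · intro n y _
    exact (hasDerivAt_pow n y).const_mul _
  · intro n y hy
    have hy : |y| < r := by simpa using hy
    rw [norm_mul, norm_mul, norm_pow, Real.norm_natCast, Real.norm_eq_abs y]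
    gcongr
  · exact (h.summable (by simp)).of_norm

theorem ev_contDiffOn {F : PowerSeries ℝ} (h : PB F) (n : ℕ) : ContDiffOn ℝ n (ev F) (ball (0:ℝ) 1) := by
  induction n generalizing F with
  | zero =>
    simp only [Nat.cast_zero, contDiffOn_zero]
    intro s hs
    exact (ev_hasDerivAt h (by simpa using hs)).continuousAt.continuousWithinAt
  | succ n ih =>
    push_cast
    rw [contDiffOn_succ_iff_deriv_of_isOpen isOpen_ball]
    refine ⟨fun s hs => (ev_hasDerivAt h (by simpa using hs)).differentiableAt.differentiableWithinAt,
      by simp, ?_⟩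
    exact (ih h.pd).congr fun s hs => (ev_hasDerivAt h (by simpa using hs)).deriv

theorem ev_mul {F G : PowerSeries ℝ} (hF : PB F) (hG : PB G) {s : ℝ} (hs : |s| < 1) :
    ev (F * G) s = ev F s * ev G s := by
  unfold ev
  rw [tsum_mul_tsum_eq_tsum_sum_antidiagonal_of_summable_norm (hF.summable hs) (hG.summable hs)]
  refine tsum_congr fun k => ?_
  rw [PowerSeries.coeff_mul, Finset.sum_mul]
  refine Finset.sum_congr rfl fun p hp => ?_
  rw [← Finset.HasAntidiagonal.mem_antidiagonal.1 hp, pow_add]; ring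

theorem ev_one (s : ℝ) : ev 1 s = 1 := by
  unfold ev
  rw [tsum_eq_single 0]
  · simp
  · intro k hk; simp [PowerSeries.coeff_one, hk]

/-- the radial Laplacian in the variable `s = r ^ 2` -/
noncomputable def Dop (N : ℕ) (F : PowerSeries ℝ) : PowerSeries ℝ :=
  PowerSeries.mk fun k => ((k:ℝ)+1) * (4 * k + 2 * N) * PowerSeries.coeff (k+1) F

theorem PB.Dop {F : PowerSeries ℝ} (N : ℕ) (h : PB F) : PB (Dop N F) := by
  obtain ⟨M, hM, j, h⟩ := h.pd
  refine ⟨(4 + 2 * N) * M, by positivity, j+1, fun k => ?_⟩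
  have hk := h k
  have e : PowerSeries.coeff k (_root_.Dop N F) = (4 * k + 2 * N) * PowerSeries.coeff k (_root_.pd F) := by
    rw [_root_.Dop, _root_.pd, PowerSeries.coeff_mk, PowerSeries.coeff_mk]; ring
  have hk0 : (0:ℝ) ≤ k := Nat.cast_nonneg k
  have hN0 : (0:ℝ) ≤ N := Nat.cast_nonneg N
  rw [e, abs_mul, abs_of_nonneg (by positivity)]
  calc (4 * (k:ℝ) + 2 * N) * |PowerSeries.coeff k (_root_.pd F)|
      ≤ ((4 + 2 * N) * (k + 1)) * (M * ((k:ℝ)+1) ^ j) := by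
        gcongr; nlinarith [mul_nonneg hN0 hk0]
    _ = _ := by ring

theorem ev_Dop (N : ℕ) {F : PowerSeries ℝ} (h : PB F) {s : ℝ} (hs : |s| < 1) :
    ev (Dop N F) s = 4 * s * ev (pd (pd F)) s + 2 * N * ev (pd F) s := by
  have h1 := (h.pd.summable hs).of_norm
  have h2 := (h.pd.pd.summable hs).of_norm
  have h3 : Summable fun k : ℕ => (k:ℝ) * PowerSeries.coeff k (pd F) * s ^ k := by
    rw [← summable_nat_add_iff 1]
    refine (h2.mul_left s).congr fun k => ?_
    simp only [pd, PowerSeries.coeff_mk]; push_cast; ring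
  have h4 : ∑' k : ℕ, (k:ℝ) * PowerSeries.coeff k (pd F) * s ^ k = s * ev (pd (pd F)) s := by
    rw [h3.tsum_eq_zero_add, ev, ← tsum_mul_left]
    simp only [Nat.cast_zero, zero_mul, zero_add]
    refine tsum_congr fun k => ?_
    simp only [pd, PowerSeries.coeff_mk]; push_cast; ring
  rw [mul_assoc 4 s, ← h4]
  unfold ev
  rw [← tsum_mul_left, ← tsum_mul_left, ← (h3.mul_left 4).tsum_add (h1.mul_left (2 * (N:ℝ)))]
  refine tsum_congr fun k => ?_
  simp only [pd, Dop, PowerSeries.coeff_mk]; ring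

theorem lap_ev {N : ℕ} {F : PowerSeries ℝ} (h : PB F) {a : ℝ} {x : EuclideanSpace ℝ (Fin N)}
    (hx : |a * ‖x‖ ^ 2| < 1) :
    lap (fun y : EuclideanSpace ℝ (Fin N) => ev F (a * ‖y‖ ^ 2)) x = a * ev (Dop N F) (a * ‖x‖ ^ 2) := by
  have hd : ∀ {G : PowerSeries ℝ}, PB G → ∀ {t : ℝ}, |a * t| < 1 →
      HasDerivAt (fun s => ev G (a * s)) (a * ev (pd G) (a * t)) t := by
    intro G hG t ht
    have h1 := (ev_hasDerivAt hG ht).comp t ((hasDerivAt_id t).const_mul a)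
    rw [mul_one, mul_comm] at h1
    exact h1
  have hev : ∀ᶠ t in nhds (‖x‖ ^ 2), |a * t| < 1 :=
    (by fun_prop : ContinuousAt (fun t : ℝ => |a * t|) (‖x‖ ^ 2)).eventually_lt_const hx
  have := lap_sq (x := x) (F := fun s => ev F (a * s)) (F1 := fun s => a * ev (pd F) (a * s))
    (F2 := a * (a * ev (pd (pd F)) (a * ‖x‖ ^ 2)))
    (by filter_upwards [hev] with t ht using hd h ht) ((hd h.pd hx).const_mul a)
  rw [this, ev_Dop N h hx]; ring

theorem coeff_le_tn (n k : ℕ) (h : k ≤ n) (F : PowerSeries ℝ) : |PowerSeries.coeff k F| ≤ tn n F :=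
  Finset.single_le_sum (f := fun k => |PowerSeries.coeff k F|) (fun _ _ => abs_nonneg _)
    (Finset.mem_range.2 (by omega))

theorem PB_of_tn {F : PowerSeries ℝ} (h : ∀ n, tn n (F - 1) ≤ 1) : PB F := by
  refine ⟨2, by norm_num, 0, fun k => ?_⟩
  have h1 := (coeff_le_tn k k le_rfl (F - 1)).trans (h k)
  rw [map_sub, PowerSeries.coeff_one, abs_le] at h1
  rw [pow_zero, mul_one, abs_le]
  split_ifs at h1 <;> constructor <;> linarith

theorem ev_zero (F : PowerSeries ℝ) : ev F 0 = PowerSeries.coeff 0 F := by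
  unfold ev
  rw [tsum_eq_single 0]
  · simp
  · intro k hk; simp [hk]

theorem pd_half_neg {Y : PowerSeries ℝ} (y1 : PowerSeries.coeff 1 Y = 1/1000)
    (y2 : PowerSeries.coeff 2 Y = -(2/1000)) (hb : ∀ n, tn n (Y - 1) ≤ 4/1000) (hY : PB Y) :
    ev (pd Y) (1/2) < 0 := by
  have hs : |(1/2:ℝ)| < 1 := by rw [abs_of_pos] <;> norm_num
  have hsum := (hY.pd.summable hs).of_norm
  have hpart : ∀ n, ∑ k ∈ Finset.range n, |PowerSeries.coeff (k+3) Y| ≤ 1/1000 := by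
    intro n
    have h := hb (n+2)
    unfold tn at h
    rw [Finset.sum_range_succ', Finset.sum_range_succ', Finset.sum_range_succ'] at h
    have a0 := abs_nonneg (PowerSeries.coeff 0 (Y - 1))
    have a1 : |PowerSeries.coeff (0+1) (Y - 1)| = 1/1000 := by
      rw [map_sub, zero_add, y1]; simp [PowerSeries.coeff_one]
    have a2 : |PowerSeries.coeff (0+1+1) (Y - 1)| = 2/1000 := by
      rw [map_sub, zero_add, show 1 + 1 = 2 from rfl, y2]; simp [PowerSeries.coeff_one]
      norm_num
    have a3 : ∑ k ∈ Finset.range n, |PowerSeries.coeff (k+1+1+1) (Y - 1)|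
        = ∑ k ∈ Finset.range n, |PowerSeries.coeff (k+3) Y| := by
      refine Finset.sum_congr rfl fun k _ => ?_
      rw [map_sub]; simp [PowerSeries.coeff_one]
    rw [a1, a2, a3] at h
    linarith
  have hS : Summable fun k => |PowerSeries.coeff (k+3) Y| :=
    summable_of_sum_range_le (fun _ => abs_nonneg _) hpart
  have hT : ∑' k, |PowerSeries.coeff (k+3) Y| ≤ 1/1000 :=
    Real.tsum_le_of_sum_range_le (fun _ => abs_nonneg _) hpart
  have hpow : ∀ k : ℕ, ((k:ℝ)+3) * (1/2) ^ (k+2) ≤ 3/4 := by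
    intro k
    induction k with
    | zero => norm_num
    | succ k ih =>
      have hk : (0:ℝ) ≤ k := Nat.cast_nonneg k
      have hp : (0:ℝ) < (1/2) ^ (k+2) := by positivity
      rw [show k + 1 + 2 = (k + 2) + 1 from rfl, pow_succ]
      push_cast
      nlinarith [mul_nonneg hk hp.le]
  have htail : ∑' k, PowerSeries.coeff (k+2) (pd Y) * (1/2:ℝ) ^ (k+2) ≤ ∑' k, 3/4 * |PowerSeries.coeff (k+3) Y| := by
    refine Summable.tsum_le_tsum (fun k => ?_) ((summable_nat_add_iff 2).2 hsum) (hS.mul_left _)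
    rw [pd, PowerSeries.coeff_mk]
    have h1 := le_abs_self (PowerSeries.coeff (k+3) Y)
    have h2 := hpow k
    have h3 : 0 ≤ ((k:ℝ)+3) * (1/2) ^ (k+2) := by positivity
    have h4 := abs_nonneg (PowerSeries.coeff (k+3) Y)
    calc (((k+2:ℕ):ℝ)+1) * PowerSeries.coeff (k+2+1) Y * (1/2) ^ (k+2)
        = (((k:ℝ)+3) * (1/2) ^ (k+2)) * PowerSeries.coeff (k+3) Y := by push_cast; ring
      _ ≤ (((k:ℝ)+3) * (1/2) ^ (k+2)) * |PowerSeries.coeff (k+3) Y| := by gcongr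
      _ ≤ _ := by gcongr
  rw [tsum_mul_left] at htail
  have key := hsum.sum_add_tsum_nat_add 2
  unfold ev
  rw [← key, Finset.sum_range_succ, Finset.sum_range_one]
  have b0 : PowerSeries.coeff 0 (pd Y) = 1/1000 := by
    rw [pd, PowerSeries.coeff_mk]; simp [y1]
  have b1 : PowerSeries.coeff 1 (pd Y) = -(4/1000) := by
    rw [pd, PowerSeries.coeff_mk, show 1 + 1 = 2 from rfl, y2]; norm_num
  rw [b0, b1]
  norm_num at htail hT ⊢
  linarith

theorem exists_profile (N : ℕ) (hN : 1 ≤ N) : ∃ Y : PowerSeries ℝ, ∃ μ s1 : ℝ, PB Y ∧ 0 < μ ∧ 0 < s1 ∧ s1 < 1 ∧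
    (∀ s, |s| < 1 → ev (Dop N (Dop N Y)) s * ev Y s ^ 2 = - μ) ∧ ev (pd Y) s1 = 0 ∧
    StrictMonoOn (ev Y) (Icc 0 s1) ∧ ev Y 0 = 1 := by
  have hN' : (1:ℝ) ≤ N := by exact_mod_cast hN
  set c : ℕ → ℝ := fun k => ((k:ℝ)+1) * (4 * k + 2 * N) * ((k + 2) * (4 * k + 4 + 2 * N)) with hc
  have hc0 : 0 < c 0 := by simp only [hc]; push_cast; positivity
  have hck : ∀ k, c 0 ≤ c k := by
    intro k
    have hk : (0:ℝ) ≤ k := Nat.cast_nonneg k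
    simp only [hc]; push_cast
    gcongr <;> linarith
  obtain ⟨Y, Q, hYQ, y0, y1, y2, hrec, hb, hq⟩ := exists_series c hc0 hck
  have pY : PB Y := PB_of_tn fun n => (hb n).trans (by norm_num)
  have pQ : PB Q := PB_of_tn fun n => (hq n).trans (by norm_num)
  have hneg := pd_half_neg y1 y2 hb pY
  have hp0 : 0 < ev (pd Y) 0 := by
    rw [ev_zero, pd, PowerSeries.coeff_mk]; simp [y1]
  have hcont : ContinuousOn (ev (pd Y)) (Icc 0 (1/2)) := fun s hs =>
    (ev_hasDerivAt pY.pd (by rw [abs_of_nonneg hs.1]; linarith [hs.2])).continuousAt.continuousWithinAt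
  have hivt : ∀ t ∈ Icc (0:ℝ) (1/2), ev (pd Y) t ≤ 0 → ∃ z ∈ Icc 0 t, ev (pd Y) z = 0 := by
    intro t ht h
    obtain ⟨z, hz, e⟩ := intermediate_value_Icc' ht.1 (hcont.mono (Icc_subset_Icc le_rfl ht.2)) ⟨h, hp0.le⟩
    exact ⟨z, hz, e⟩
  have hcomp : IsCompact (Icc (0:ℝ) (1/2) ∩ ev (pd Y) ⁻¹' {0}) :=
    isCompact_Icc.of_isClosed_subset (hcont.preimage_isClosed_of_isClosed isClosed_Icc isClosed_singleton)
      inter_subset_left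
  obtain ⟨s1, ⟨hs1, hz⟩, hleast⟩ := hcomp.exists_isLeast (by
    obtain ⟨z, hz, e⟩ := hivt (1/2) ⟨by norm_num, le_rfl⟩ hneg.le
    exact ⟨z, hz, e⟩)
  have hz : ev (pd Y) s1 = 0 := hz
  have hs0 : 0 < s1 := by
    rcases hs1.1.eq_or_lt with h | h
    · rw [← h] at hz; linarith
    · exact h
  have hpos : ∀ t, 0 ≤ t → t < s1 → 0 < ev (pd Y) t := by
    intro t h0 h1
    by_contra! hc
    obtain ⟨z, hz, e⟩ := hivt t ⟨h0, by linarith [hs1.2]⟩ hc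
    have := hleast ⟨⟨hz.1, by linarith [hs1.2, hz.2]⟩, e⟩
    linarith [hz.2]
  have hder : ∀ t, 0 ≤ t → t ≤ s1 → HasDerivAt (ev Y) (ev (pd Y) t) t := fun t h0 h1 =>
    ev_hasDerivAt pY (by rw [abs_of_nonneg h0]; linarith [hs1.2])
  refine ⟨Y, 2/1000 * c 0, s1, pY, by positivity, hs0, by linarith [hs1.2], ?_, hz, ?_, by rw [ev_zero, y0]⟩
  · intro s hs
    have e1 : ev (Dop N (Dop N Y)) s = -(2/1000 * c 0) * ev (Q * Q) s := by
      unfold ev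
      rw [← tsum_mul_left]
      refine tsum_congr fun k => ?_
      rw [← mul_assoc, ← hrec k]
      simp only [Dop, PowerSeries.coeff_mk, hc]; push_cast; ring
    have e2 : ev Y s * ev Q s = 1 := by rw [← ev_mul pY pQ hs, hYQ, ev_one]
    rw [e1, ev_mul pQ pQ hs]
    linear_combination (-(2/1000 * c 0)) * (ev Y s * ev Q s + 1) * e2
  · apply strictMonoOn_of_deriv_pos (convex_Icc _ _)
    · exact fun t ht => (hder t ht.1 ht.2).continuousAt.continuousWithinAt
    · intro t ht
      rw [interior_Icc] at ht
      rw [(hder t ht.1.le ht.2.le).deriv]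
      exact hpos t ht.1.le ht.2

theorem solSet_nonempty (N : ℕ) (hN : 1 ≤ N) : (solSet N).Nonempty := by
  obtain ⟨Y, μ, s1, pY, hμ, hs0, hs1, hode, hz, hmono, hY0⟩ := exists_profile N hN
  have hb1 : s1 ∈ Icc 0 s1 := ⟨hs0.le, le_rfl⟩
  have hb0 : (0:ℝ) ∈ Icc 0 s1 := ⟨le_rfl, hs0.le⟩
  have hY1 : 1 < ev Y s1 := by rw [← hY0]; exact hmono hb0 hb1 hs0
  have hYp : 0 < ev Y s1 := by linarith
  have hYs : ∀ s ∈ Icc 0 s1, 1 ≤ ev Y s := fun s hs => by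
    rw [← hY0]; exact hmono.monotoneOn hb0 hs hs.1
  set U : Set (EuclideanSpace ℝ (Fin N)) := {x | |s1 * ‖x‖ ^ 2| < 1} with hU
  have hUo : IsOpen U := isOpen_lt (by fun_prop) continuous_const
  have hUin : ∀ x : EuclideanSpace ℝ (Fin N), ‖x‖ ≤ 1 → s1 * ‖x‖ ^ 2 ∈ Icc 0 s1 := by
    intro x hx
    have := norm_nonneg x
    exact ⟨by positivity, mul_le_of_le_one_right hs0.le (pow_le_one₀ this hx)⟩
  have hUm : ∀ x : EuclideanSpace ℝ (Fin N), ‖x‖ ≤ 1 → x ∈ U := by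
    intro x hx
    have := hUin x hx
    simp only [hU, mem_setOf_eq]
    rw [abs_of_nonneg this.1]; linarith [this.2]
  set u : EuclideanSpace ℝ (Fin N) → ℝ := fun x => 1 - ev Y (s1 * ‖x‖ ^ 2) / ev Y s1 with hu
  have hcd : ContDiffOn ℝ 4 u U := by
    have h1 : ContDiffOn ℝ 4 (fun x : EuclideanSpace ℝ (Fin N) => ev Y (s1 * ‖x‖ ^ 2)) U :=
      (ev_contDiffOn pY 4).comp (g := ev Y) (f := fun x : EuclideanSpace ℝ (Fin N) => s1 * ‖x‖ ^ 2)
        ((contDiff_const.mul (contDiff_norm_sq ℝ)).contDiffOn) (fun x hx => by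
          rw [mem_ball_zero_iff, Real.norm_eq_abs]; exact hx)
    exact contDiffOn_const.sub (h1.div_const _)
  have hsmul : ∀ (F : PowerSeries ℝ) (a b : ℝ), PB F → PB (PowerSeries.C b * F) := by
    rintro F a b ⟨M, hM, j, h⟩
    refine ⟨|b| * M, by positivity, j, fun k => ?_⟩
    rw [PowerSeries.coeff_C_mul, abs_mul, mul_assoc]
    gcongr; exact h k
  have hevs : ∀ (F : PowerSeries ℝ) (b s : ℝ), ev (PowerSeries.C b * F) s = b * ev F s := by
    intro F b s
    unfold ev
    rw [← tsum_mul_left]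
    refine tsum_congr fun k => ?_
    rw [PowerSeries.coeff_C_mul]; ring
  have hDs : ∀ (F : PowerSeries ℝ) (b : ℝ), Dop N (PowerSeries.C b * F) = PowerSeries.C b * Dop N F := by
    intro F b
    ext k
    simp only [Dop, PowerSeries.coeff_mk, PowerSeries.coeff_C_mul]; ring
  -- the rescaled profile as one series
  set b : ℝ := -(1 / ev Y s1) with hbdef
  have hlap1 : ∀ x ∈ U, lap u x = s1 * ev (Dop N (PowerSeries.C b * Y)) (s1 * ‖x‖ ^ 2) := by
    intro x hx
    have h1 : PB (1 + PowerSeries.C b * Y) := by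
      obtain ⟨M, hM, j, h⟩ := hsmul Y 0 b pY
      refine ⟨1 + M, by positivity, j, fun k => ?_⟩
      rw [map_add, add_mul]
      refine (abs_add_le _ _).trans (add_le_add ?_ (h k))
      have : (1:ℝ) ≤ ((k:ℝ)+1) ^ j := one_le_pow₀ (by linarith [(Nat.cast_nonneg k : (0:ℝ) ≤ k)])
      rw [PowerSeries.coeff_one]
      split_ifs <;> simp <;> linarith
    have h2 : lap u x = lap (fun y : EuclideanSpace ℝ (Fin N) => ev (1 + PowerSeries.C b * Y) (s1 * ‖y‖ ^ 2)) x := by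
      apply lap_congr
      filter_upwards [hUo.mem_nhds hx] with y hy
      have e : ev (1 + PowerSeries.C b * Y) (s1 * ‖y‖ ^ 2) = ev 1 (s1 * ‖y‖ ^ 2) + ev (PowerSeries.C b * Y) (s1 * ‖y‖ ^ 2) := by
        unfold ev
        have p1 : PB (1 : PowerSeries ℝ) := PB_of_tn fun n => by unfold tn; simp
        rw [← (p1.summable hy).of_norm.tsum_add ((hsmul Y 0 b pY).summable hy).of_norm]
        refine tsum_congr fun k => ?_
        rw [map_add]; ring
      rw [e, ev_one, hevs, hu, hbdef]; ring
    rw [h2, lap_ev h1 hx]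
    congr 2
    ext k
    simp only [Dop, PowerSeries.coeff_mk, map_add, PowerSeries.coeff_one]
    simp
  have hlap2 : ∀ x ∈ U, biharm u x = s1 ^ 2 * b * ev (Dop N (Dop N Y)) (s1 * ‖x‖ ^ 2) := by
    intro x hx
    unfold biharm
    have h2 : lap (lap u) x = lap (fun y : EuclideanSpace ℝ (Fin N) => ev (PowerSeries.C s1 * Dop N (PowerSeries.C b * Y)) (s1 * ‖y‖ ^ 2)) x := by
      apply lap_congr
      filter_upwards [hUo.mem_nhds hx] with y hy
      rw [hlap1 y hy, hevs]
    rw [h2, lap_ev (hsmul _ 0 _ ((hsmul Y 0 b pY).Dop N)) hx, hDs, hDs, hDs, hevs, hevs]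
    ring
  refine ⟨s1 ^ 2 * μ / ev Y s1 ^ 3, by positivity, u, ?_, ?_, ?_, ?_, ?_, ?_⟩
  · exact hcd.mono fun x hx => hUm x (by simpa using hx)
  · intro x hx
    have hx : ‖x‖ < 1 := by simpa using hx
    have := norm_nonneg x
    have h1 : ev Y (s1 * ‖x‖ ^ 2) < ev Y s1 := hmono (hUin x hx.le) hb1
      (mul_lt_of_lt_one_right hs0 (pow_lt_one₀ this hx two_ne_zero))
    simp only [hu]
    rw [sub_pos, div_lt_one hYp]; exact h1
  · intro x hx
    have hx : ‖x‖ < 1 := by simpa using hx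
    have h1 := hYs _ (hUin x hx.le)
    have : 0 < ev Y (s1 * ‖x‖ ^ 2) / ev Y s1 := div_pos (by linarith) hYp
    simp only [hu]; linarith
  · intro x hx
    have hx : ‖x‖ < 1 := by simpa using hx
    have h1 := hYs _ (hUin x hx.le)
    have h2 := hode _ (hUm x hx.le)
    have h3 : ev Y (s1 * ‖x‖ ^ 2) ≠ 0 := by linarith
    have h4 := hYp.ne'
    rw [hlap2 x (hUm x hx.le)]
    have h5 : ev (Dop N (Dop N Y)) (s1 * ‖x‖ ^ 2) = -μ / ev Y (s1 * ‖x‖ ^ 2) ^ 2 := by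
      rw [eq_div_iff (pow_ne_zero 2 h3)]; exact h2
    have h6 : 1 - u x = ev Y (s1 * ‖x‖ ^ 2) / ev Y s1 := by simp only [hu]; ring
    rw [h5, h6, hbdef]
    field_simp
  · intro x hx
    simp only [hu]
    rw [hx, one_pow, mul_one, div_self hYp.ne', sub_self]
  · intro x hx
    have hxU := hUm x hx.le
    have hd : DifferentiableAt ℝ u x := (hcd.contDiffAt (hUo.mem_nhds hxU)).differentiableAt (by norm_num)
    have hud : UniqueDiffWithinAt ℝ (closedBall (0 : EuclideanSpace ℝ (Fin N)) 1) x :=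
      uniqueDiffOn_convex (convex_closedBall _ _) ⟨0, ball_subset_interior_closedBall (by simp)⟩ x
        (by simpa using hx.le)
    rw [hd.fderivWithin hud]
    have hn : HasFDerivAt (fun y : EuclideanSpace ℝ (Fin N) => s1 * ‖y‖ ^ 2) (s1 • (2 • innerSL ℝ x)) x :=
      ((hasStrictFDerivAt_norm_sq x).hasFDerivAt).const_mul s1
    have hE : HasDerivAt (ev Y) 0 (s1 * ‖x‖ ^ 2) := by
      have := ev_hasDerivAt pY hxU
      rwa [hx, one_pow, mul_one, hz, ← mul_one s1, ← one_pow 2, ← hx] at this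
    have hc := (hE.comp_hasFDerivAt x hn)
    have hv : HasFDerivAt u _ x := ((hc.mul_const (ev Y s1)⁻¹).const_sub 1)
    rw [hv.fderiv]
    simp

theorem solSet_sSup_pos (N : ℕ) (hN : 1 ≤ N) : 0 < sSup (solSet N) := by
  obtain ⟨l, hl⟩ := solSet_nonempty N hN
  exact hl.1.trans_le (le_csSup (solSet_bdd N) hl)

/-- for 5 ≤ N ≤ 8 the extremal solution u* is regular: sup_B u* < 1. -/
theorem extremal_regular_dim_five_to_eight (N : ℕ) (hN₁ : 5 ≤ N) (hN₂ : N ≤ 8)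
    (uMin : ℝ → EuclideanSpace ℝ (Fin N) → ℝ)
    (hMin : ∀ lam : ℝ, 0 < lam → lam < sSup (solSet N) →
      IsClassicalSolution N lam (uMin lam) ∧
        ∀ v, IsClassicalSolution N lam v →
          ∀ x ∈ ball (0 : EuclideanSpace ℝ (Fin N)) 1, uMin lam x ≤ v x)
    (hMono : ∀ x ∈ ball (0 : EuclideanSpace ℝ (Fin N)) 1, ∀ l₁ l₂ : ℝ,
      0 < l₁ → l₁ ≤ l₂ → l₂ < sSup (solSet N) → uMin l₁ x ≤ uMin l₂ x)
    (uStar : EuclideanSpace ℝ (Fin N) → ℝ)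
    (hStar : ∀ x ∈ ball (0 : EuclideanSpace ℝ (Fin N)) 1,
      Tendsto (fun lam => uMin lam x) (nhdsWithin (sSup (solSet N)) (Iio (sSup (solSet N))))
        (nhds (uStar x)))
    :
    sSup (uStar '' ball (0 : EuclideanSpace ℝ (Fin N)) 1) < 1 := by
  obtain ⟨m, rfl⟩ : ∃ m, N = m + 1 := ⟨N - 1, by omega⟩
  exact regular_of_pos (by omega) (by omega) (solSet_sSup_pos (m + 1) (by omega)) uMin hMin hMono uStar hStar
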